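/- arXiv:1802.00067 — 2 statements merged into one kernel-verified Lean document; each statement's English description precedes it below -/
import Mathlib

section
/- Let n ≥ 2 be fixed, c > 0, and let (X_d)_{d≥1} be a unitarily invariant sequence of random positive semidefinite matrices X_d ∈ M_n(ℂ) ⊗ M_d(ℂ) converging strongly to the Marčenko–Pastur distribution MP_c. If c < (n−1)²/(4n), then almost surely, for all sufficiently large d, X_d ∉ SEP_{n,d}; in particular lim_{d→∞} P(X_d ∈ SEP_{n,d}) = 0. -/
/-!
If `X_d` is separable and its compression to every subspace `x ⊗ ℂ^d`, `x` in the unit sphere of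
`ℂ^n`, is at most `K + T_x` with `tr T_x = o(d)`, then pairing `X_d` with `K + 1 ⊗ S - X_d` for a
suitable `S` of small trace gives `tr X_d² ≤ K tr X_d + o(d)`: in the limit, `m₂ ≤ K m₁`.

For a unitarily invariant sequence with limit `μ`, one can take `K = z - (1 - 1/n) / G(z)` with
`G(z) = ∫ (z - x)⁻¹ dμ`. Indeed the compression of `X_d` to `x ⊗ ℂ^d` is a compression to a random
subspace, of codimension `(n - 1)d`. In a barrier argument, one cuts by `(n - 1)d` random phase
vectors, one at a time: each step updates the resolvent by a rank-one correction and shifts the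
spectral parameter by the amount which keeps the normalized trace of the resolvent constant. The
failure probabilities are summable in `d`, so the bound holds almost surely, eventually in `d`, for
all `x` in a finite net of the sphere, hence up to a small loss for all `x`.

For the Marčenko–Pastur law and `z = (1 + √(cn)) (1 + √(c/n))`, one has `G(z) = (1 + √(cn))⁻¹` and
`K = (1 + √(cn))² / n`. This is less than `m₂ / m₁ = 1 + c` exactly when `c < (n - 1)² / (4n)`.
-/

open MeasureTheory Filter Topology Polynomial Matrix Kronecker
open scoped ComplexOrder

noncomputable section

/-- Measurable space structure on matrices (entrywise). -/
instance matMS (m n : Type*) : MeasurableSpace (Matrix m n ℂ) :=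
  inferInstanceAs (MeasurableSpace (m → n → ℂ))

/-- The ℓ²→ℓ² operator norm of a complex square matrix. -/
def opNorm {N : Type*} [Fintype N] [DecidableEq N] (X : Matrix N N ℂ) : ℝ :=
  ‖Matrix.toEuclideanCLM (𝕜 := ℂ) (n := N) X‖

/-- Application of a real polynomial to a complex square matrix. -/
def polyApply {N : Type*} [Fintype N] [DecidableEq N] (P : Polynomial ℝ)
    (X : Matrix N N ℂ) : Matrix N N ℂ :=
  Polynomial.aeval X (P.map (algebraMap ℝ ℂ))

/-- The (topological) support of a measure on ℝ: points all of whose open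
neighbourhoods have positive measure. -/
def msupport (μ : Measure ℝ) : Set ℝ :=
  {x | ∀ U : Set ℝ, IsOpen U → x ∈ U → 0 < μ U}

/-- Strong convergence of a sequence of random matrices `X d ∈ M_n(ℂ) ⊗ M_d(ℂ)`
towards a compactly supported probability measure `μ`: almost surely, for every
real polynomial `P`, the normalized traces of `P(X d)` converge to `∫ P dμ` and the
operator norms of `P(X d)` converge to `sup {|P(x)| : x ∈ supp μ}`. -/
def StrongConv {Ω : Type*} [MeasurableSpace Ω] (ℙ : Measure Ω) (n : ℕ)
    (X : (d : ℕ) → Ω → Matrix (Fin n × Fin d) (Fin n × Fin d) ℂ)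
    (μ : Measure ℝ) : Prop :=
  ∀ᵐ ω ∂ℙ, ∀ P : Polynomial ℝ,
    Tendsto (fun d : ℕ => ((n : ℂ) * (d : ℂ))⁻¹ * (polyApply P (X d ω)).trace) atTop
      (𝓝 ((∫ x, P.eval x ∂μ : ℝ) : ℂ)) ∧
    Tendsto (fun d : ℕ => opNorm (polyApply P (X d ω))) atTop
      (𝓝 (sSup ((fun x => |P.eval x|) '' msupport μ)))

/-- Unitary invariance of a sequence of random matrices: for every `d` and every
unitary `U`, the random matrix `U (X d) U*` has the same distribution as `X d`. -/
def UnitInv {Ω : Type*} [MeasurableSpace Ω] (ℙ : Measure Ω) (n : ℕ)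
    (X : (d : ℕ) → Ω → Matrix (Fin n × Fin d) (Fin n × Fin d) ℂ) : Prop :=
  ∀ d : ℕ, ∀ U : Matrix (Fin n × Fin d) (Fin n × Fin d) ℂ,
    U ∈ unitary (Matrix (Fin n × Fin d) (Fin n × Fin d) ℂ) →
    Measure.map (fun ω => U * X d ω * star U) ℙ = Measure.map (X d) ℙ

/-- The separable cone `SEP_{n,d}`. -/
def SEP (n d : ℕ) : Set (Matrix (Fin n × Fin d) (Fin n × Fin d) ℂ) :=
  {X | ∃ (k : ℕ) (A : Fin k → Matrix (Fin n) (Fin n) ℂ)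
      (B : Fin k → Matrix (Fin d) (Fin d) ℂ),
    (∀ i, (A i).PosSemidef) ∧ (∀ i, (B i).PosSemidef) ∧ X = ∑ i, A i ⊗ₖ B i}

/-- The partial transpose on `M_n(ℂ) ⊗ M_d(ℂ)`: transposition of the first factor. -/
def ptrans {n d : ℕ} (X : Matrix (Fin n × Fin d) (Fin n × Fin d) ℂ) :
    Matrix (Fin n × Fin d) (Fin n × Fin d) ℂ :=
  fun p q => X (q.1, p.2) (p.1, q.2)

/-- The PPT cone `PPT_{n,d}`: positive semidefinite matrices with positive
semidefinite partial transpose. -/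
def PPT (n d : ℕ) : Set (Matrix (Fin n × Fin d) (Fin n × Fin d) ℂ) :=
  {X | X.PosSemidef ∧ (ptrans X).PosSemidef}

/-- The Marčenko–Pastur distribution of parameter `c > 0`:
`max(1−c,0)·δ₀ + (√((b−x)(x−a))/(2πx))·1_{(a,b)}(x) dx`,
with `a = (1−√c)²` and `b = (1+√c)²`. -/
def MP (c : ℝ) : Measure ℝ :=
  ENNReal.ofReal (max (1 - c) 0) • Measure.dirac (0 : ℝ) +
    MeasureTheory.volume.withDensity (fun x => ENNReal.ofReal
      (Set.indicator (Set.Ioo ((1 - Real.sqrt c) ^ 2) ((1 + Real.sqrt c) ^ 2))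
        (fun y => Real.sqrt (((1 + Real.sqrt c) ^ 2 - y) * (y - (1 - Real.sqrt c) ^ 2))
          / (2 * Real.pi * y)) x))

open scoped MatrixOrder

section TraceAndCalculus

variable {ι κ : Type*} [Fintype ι]

lemma trace_re_mono {A B : Matrix ι ι ℂ} (h : A ≤ B) : A.trace.re ≤ B.trace.re := by
  have := h.trace_nonneg
  rw [trace_sub, sub_nonneg] at this
  exact (Complex.le_def.1 this).1

lemma trace_re_nonneg {A : Matrix ι ι ℂ} (hA : 0 ≤ A) : 0 ≤ A.trace.re := by
  simpa using trace_re_mono hA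

lemma conjTranspose_mul_mul_mono [Finite κ] {A B : Matrix ι ι ℂ} (h : A ≤ B) (C : Matrix ι κ ℂ) :
    Cᴴ * A * C ≤ Cᴴ * B * C := by
  have := Fintype.ofFinite κ
  rw [le_iff, ← Matrix.sub_mul, ← Matrix.mul_sub]
  exact h.conjTranspose_mul_mul_same C

lemma conjTranspose_mul_mul_nonneg [Finite κ] {A : Matrix ι ι ℂ} (hA : 0 ≤ A)
    (C : Matrix ι κ ℂ) : 0 ≤ Cᴴ * A * C := by
  simpa using conjTranspose_mul_mul_mono hA C

lemma trace_mul_re_nonneg {A B : Matrix ι ι ℂ} (hA : 0 ≤ A) (hB : 0 ≤ B) :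
    0 ≤ (A * B).trace.re := by
  classical
  obtain ⟨C, rfl⟩ := CStarAlgebra.nonneg_iff_eq_mul_star_self.1 hB
  rw [← Matrix.mul_assoc, trace_mul_comm, ← Matrix.mul_assoc]
  exact trace_re_nonneg (conjTranspose_mul_mul_nonneg hA C)

lemma trace_mul_self_re_mono {A B : Matrix ι ι ℂ} (hA : 0 ≤ A) (h : A ≤ B) :
    (A * A).trace.re ≤ (B * B).trace.re := by
  have := trace_mul_re_nonneg (sub_nonneg.2 h) (add_nonneg hA (hA.trans h))
  rw [Matrix.mul_add, Matrix.sub_mul, Matrix.sub_mul, trace_add, trace_sub, trace_sub,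
    trace_mul_comm B A] at this
  simp only [Complex.add_re, Complex.sub_re] at this
  linarith

lemma conjTranspose_add_mul_add_le [Finite κ] {Q : Matrix ι ι ℂ} (hQ : 0 ≤ Q) {ε : ℝ} (hε : 0 < ε)
    (V H : Matrix ι κ ℂ) :
    (V + H)ᴴ * Q * (V + H) ≤ (1 + ε) • (Vᴴ * Q * V) + (1 + ε⁻¹) • (Hᴴ * Q * H) := by
  have := Fintype.ofFinite κ
  have hdiff : (1 + ε) • (Vᴴ * Q * V) + (1 + ε⁻¹) • (Hᴴ * Q * H) - (V + H)ᴴ * Q * (V + H) =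
      ε • ((V - ε⁻¹ • H)ᴴ * Q * (V - ε⁻¹ • H)) := by
    simp only [conjTranspose_add, conjTranspose_sub, conjTranspose_smul, star_trivial,
      Matrix.add_mul, Matrix.mul_add, Matrix.sub_mul, Matrix.mul_sub, Matrix.smul_mul,
      Matrix.mul_smul]
    match_scalars <;> field_simp <;> ring
  rw [← sub_nonneg, hdiff]
  exact smul_nonneg hε.le (conjTranspose_mul_mul_nonneg hQ _)

variable [DecidableEq ι]

lemma continuousOn_spectrum (A : Matrix ι ι ℂ) (f : ℝ → ℝ) : ContinuousOn f (spectrum ℝ A) :=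
  A.finite_real_spectrum.continuousOn f

lemma trace_cfc_re {A : Matrix ι ι ℂ} (hA : A.IsHermitian) (f : ℝ → ℝ) :
    (cfc f A).trace.re = ∑ i, f (hA.eigenvalues i) := by
  rw [hA.cfc_eq, Matrix.IsHermitian.cfc, Unitary.conjStarAlgAut_apply, trace_mul_cycle,
    Unitary.coe_star_mul_self, Matrix.one_mul, trace_diagonal, Complex.re_sum]
  rfl

end TraceAndCalculus

section Compression

variable {ι κ : Type*} [Fintype ι]

/-- The compression of a positive semidefinite matrix `B` that annihilates `w`, that is the Schur
complement `B - ⟨w, B w⟩⁻¹ (B w) (B w)*`. When `B` is invertible this is the inverse of the corner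
of `B⁻¹` on the orthogonal complement of `w`; it is `B` itself when `B w = 0`. -/
def compress (B : Matrix ι ι ℂ) (w : ι → ℂ) : Matrix ι ι ℂ :=
  B - (star w ⬝ᵥ B *ᵥ w)⁻¹ • vecMulVec (B *ᵥ w) (star (B *ᵥ w))

lemma compress_le {B : Matrix ι ι ℂ} (hB : 0 ≤ B) (w : ι → ℂ) : compress B w ≤ B := by
  refine sub_le_self _ (PosSemidef.nonneg ?_)
  exact (posSemidef_vecMulVec_self_star _).smul
    (inv_nonneg.2 (hB.posSemidef.dotProduct_mulVec_nonneg w))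

lemma compress_eq_conjTranspose_mul_mul [DecidableEq ι] {B : Matrix ι ι ℂ} (hB : 0 ≤ B)
    (w : ι → ℂ) :
    compress B w = (1 - (star w ⬝ᵥ B *ᵥ w)⁻¹ • vecMulVec w (star (B *ᵥ w)))ᴴ * B *
      (1 - (star w ⬝ᵥ B *ᵥ w)⁻¹ • vecMulVec w (star (B *ᵥ w))) := by
  set q := star w ⬝ᵥ B *ᵥ w with hq
  have hB' : Bᴴ = B := hB.posSemidef.isHermitian
  have hq_star : star q = q :=
    Complex.conj_eq_iff_im.2 (Complex.le_def.1 (hB.posSemidef.dotProduct_mulVec_nonneg w)).2.symm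
  have hq_inv : q⁻¹ * (q⁻¹ * q) = q⁻¹ := by
    rcases eq_or_ne q 0 with h | h
    · simp [h]
    · rw [inv_mul_cancel₀ h, mul_one]
  have hstar : star (B *ᵥ w) = star w ᵥ* B := by rw [star_mulVec, hB']
  rw [conjTranspose_sub, conjTranspose_one, conjTranspose_smul, star_inv₀, hq_star,
    conjTranspose_vecMulVec, star_star, compress, ← hq]
  have hsw : star (B *ᵥ w) ⬝ᵥ w = q := by rw [hstar, ← dotProduct_mulVec]
  simp only [Matrix.sub_mul, Matrix.mul_sub, Matrix.one_mul, Matrix.mul_one, Matrix.smul_mul,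
    Matrix.mul_smul, vecMulVec_mul, mul_vecMulVec, ← hstar, vecMulVec_mulVec, hsw, op_smul_eq_smul,
    smul_smul, sub_mulVec, smul_mulVec]
  rw [sub_vecMulVec, smul_vecMulVec, smul_sub, smul_smul, hq_inv, sub_self, sub_zero]

lemma compress_nonneg {B : Matrix ι ι ℂ} (hB : 0 ≤ B) (w : ι → ℂ) : 0 ≤ compress B w := by
  classical
  rw [compress_eq_conjTranspose_mul_mul hB]
  exact conjTranspose_mul_mul_nonneg hB _

lemma trace_compress (B : Matrix ι ι ℂ) (w : ι → ℂ) :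
    (compress B w).trace = B.trace - (star w ⬝ᵥ B *ᵥ w)⁻¹ * (star (B *ᵥ w) ⬝ᵥ B *ᵥ w) := by
  rw [compress, trace_sub, trace_smul, trace_vecMulVec, dotProduct_comm (B *ᵥ w), smul_eq_mul]

lemma compress_mul_eq_of_vecMul_eq_zero {B : Matrix ι ι ℂ} (hB : B.IsHermitian)
    {w : ι → ℂ} {C J : Matrix ι κ ℂ} (hBC : B * C = J) (hw : star w ᵥ* J = 0) :
    compress B w * C = J := by
  have : vecMulVec (B *ᵥ w) (star (B *ᵥ w)) * C = 0 := by
    rw [vecMulVec_mul, star_mulVec, hB.eq, vecMul_vecMul, hBC, hw]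
    ext
    simp [vecMulVec_apply]
  rw [compress, Matrix.sub_mul, hBC, Matrix.smul_mul, this, smul_zero, sub_zero]

end Compression

section ShiftTruncate

/-- The shift of the spectral parameter that costs trace at rate `τ`: a nonnegative number
`b ≤ L` moves to `b / (1 - δ b) ≤ b + τ b²` when `δ = shift τ L`. -/
def shift (τ L : ℝ) : ℝ := τ / (1 + τ * L)

/-- `u = b / (1 - δ b)` is the shifted value and `t = L⁻¹ - u⁻¹` is what brings it back to `L` when
it exceeds `L`; then `L + L² t = 2 L - L² / u ≤ u`. -/
lemma exists_shift_truncate_real {τ L b : ℝ} (hτ : 0 ≤ τ) (hL : 0 < L) (hb : 0 ≤ b) (hbL : b ≤ L) :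
    ∃ f t : ℝ, 0 ≤ f ∧ f ≤ L ∧ 0 ≤ t ∧ f * (1 + (t - shift τ L) * b) = b ∧
      f + L ^ 2 * t ≤ b + τ * b ^ 2 := by
  have : 0 < 1 + τ * L := by positivity
  rcases hb.eq_or_lt with rfl | hb
  · exact ⟨0, 0, le_rfl, hL.le, le_rfl, by ring, by simp⟩
  have hsub : 1 / (1 + τ * b) ≤ 1 - shift τ L * b := by
    rw [shift, div_le_iff₀ (by positivity), ← sub_nonneg]
    have : (1 - τ / (1 + τ * L) * b) * (1 + τ * b) - 1 = τ ^ 2 * b * (L - b) / (1 + τ * L) := by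
      field_simp
      ring
    rw [this]
    have := sub_nonneg.2 hbL
    positivity
  have hpos : 0 < 1 - shift τ L * b := lt_of_lt_of_le (by positivity) hsub
  set u := b / (1 - shift τ L * b) with hu
  have hu0 : 0 < u := by positivity
  have hub : u ≤ b + τ * b ^ 2 := by
    calc u ≤ b / (1 / (1 + τ * b)) := div_le_div_of_nonneg_left hb.le (by positivity) hsub
      _ = b + τ * b ^ 2 := by field_simp
  rcases le_total u L with h | h
  · refine ⟨u, 0, hu0.le, h, le_rfl, ?_, by simpa using hub⟩
    rw [zero_sub, hu, neg_mul, ← sub_eq_add_neg, div_mul_cancel₀ _ hpos.ne']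
  · refine ⟨L, L⁻¹ - u⁻¹, hL.le, le_rfl, sub_nonneg.2 (inv_anti₀ hL h), ?_, ?_⟩
    · rw [hu]
      field_simp
      ring
    · refine le_trans ?_ hub
      have : u - (L + L ^ 2 * (L⁻¹ - u⁻¹)) = (u - L) ^ 2 / u := by
        field_simp
        ring
      have := this ▸ (by positivity : 0 ≤ (u - L) ^ 2 / u)
      linarith

lemma exists_shift_truncate {ι : Type*} [Fintype ι] [DecidableEq ι] {τ L : ℝ} (hτ : 0 ≤ τ)
    (hL : 0 < L) {B : Matrix ι ι ℂ} (hB : 0 ≤ B) (hBL : B ≤ L • 1) :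
    ∃ B' T : Matrix ι ι ℂ, 0 ≤ B' ∧ B' ≤ L • 1 ∧ 0 ≤ T ∧ B' * (1 + (T - shift τ L • 1) * B) = B ∧
      B'.trace.re + L ^ 2 * T.trace.re ≤ B.trace.re + τ * (B * B).trace.re := by
  have hB_sa : IsSelfAdjoint B := hB.isSelfAdjoint
  have hspec : ∀ b ∈ spectrum ℝ B, 0 ≤ b ∧ b ≤ L := by
    rw [← Algebra.algebraMap_eq_smul_one] at hBL
    exact fun b hb ↦
      ⟨spectrum_nonneg_of_nonneg hB hb, (le_algebraMap_iff_spectrum_le hB_sa).1 hBL b hb⟩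
  choose! f t hf hfL ht hft hcost using
    fun b hb ↦ exists_shift_truncate_real hτ hL (hspec b hb).1 (hspec b hb).2
  have hcont := continuousOn_spectrum B
  refine ⟨cfc f B, cfc t B, cfc_nonneg hf, ?_, cfc_nonneg ht, ?_, ?_⟩
  · rw [← Algebra.algebraMap_eq_smul_one]
    exact cfc_le_algebraMap f L B hfL (hcont f)
  · calc cfc f B * (1 + (cfc t B - shift τ L • 1) * B)
        = cfc (fun b ↦ f b * (1 + (t b - shift τ L) * b)) B := by
          rw [cfc_mul _ _ B (hcont _) (hcont _), cfc_add _ _ _ (hcont _) (hcont _),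
            cfc_mul _ _ B (hcont _) (hcont _), cfc_sub _ _ _ (hcont _) (hcont _), cfc_const_one ..,
            cfc_const .., cfc_id' .., Algebra.algebraMap_eq_smul_one]
      _ = cfc (fun b ↦ b) B := cfc_congr hft
      _ = B := cfc_id' ℝ B
  · have hBH : B.IsHermitian := hB_sa
    have hsq : B * B = cfc (fun b : ℝ ↦ b ^ 2) B := by rw [cfc_pow_id .., sq]
    have hid := trace_cfc_re hBH id
    rw [cfc_id ℝ B] at hid
    rw [hsq, hid, trace_cfc_re hBH, trace_cfc_re hBH, trace_cfc_re hBH, Finset.mul_sum,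
      Finset.mul_sum, ← Finset.sum_add_distrib, ← Finset.sum_add_distrib]
    exact Finset.sum_le_sum fun i _ ↦ hcost _ (hBH.eigenvalues_mem_spectrum_real i)

end ShiftTruncate

section RandomPhases

variable {ι : Type*}

/-- The vector of cube roots of unity with phases `σ`. A uniformly random `σ` plays the role of a
random direction; cube roots are used since for them, unlike for signs, `⟨w, C w⟩ - tr C` is a sum
of orthogonal random variables. -/
def phaseVec (σ : ι → ZMod 3) : ι → ℂ := fun i ↦ ZMod.stdAddChar (σ i)

lemma star_phaseVec_mul_self (σ : ι → ZMod 3) (i : ι) : star (phaseVec σ i) * phaseVec σ i = 1 := by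
  rw [Complex.star_def, Complex.conj_mul', phaseVec, AddChar.norm_apply]
  simp

variable [Fintype ι]

lemma trace_mul_self_re_eq_sum {C : Matrix ι ι ℂ} (hC : C.IsHermitian) :
    (C * C).trace.re = ∑ p : ι × ι, ‖C p.1 p.2‖ ^ 2 := by
  nth_rw 2 [← hC.eq]
  simp [trace, Matrix.mul_apply, Fintype.sum_prod_type, Complex.mul_conj', ← Complex.ofReal_pow]

lemma star_phaseVec_dotProduct_sub_trace (C : Matrix ι ι ℂ) (σ : ι → ZMod 3) :
    star (phaseVec σ) ⬝ᵥ C *ᵥ phaseVec σ - C.trace =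
      ∑ p ∈ Finset.univ.offDiag, C p.1 p.2 * (star (phaseVec σ p.1) * phaseVec σ p.2) := by
  classical
  have hdiag : ∑ p ∈ Finset.univ.diag, C p.1 p.2 * (star (phaseVec σ p.1) * phaseVec σ p.2) =
      C.trace := by
    simp only [Finset.sum_diag, star_phaseVec_mul_self, mul_one, trace, diag_apply]
  have hsum : star (phaseVec σ) ⬝ᵥ C *ᵥ phaseVec σ =
      ∑ p : ι × ι, C p.1 p.2 * (star (phaseVec σ p.1) * phaseVec σ p.2) := by
    simp only [dotProduct, mulVec, Finset.mul_sum, Fintype.sum_prod_type, Pi.star_apply]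
    exact Finset.sum_congr rfl fun i _ ↦ Finset.sum_congr rfl fun j _ ↦ by ring
  rw [hsum, ← Finset.univ_product_univ, ← Finset.diag_union_offDiag,
    Finset.sum_union (Finset.disjoint_diag_offDiag _), hdiag, add_sub_cancel_left]

variable [DecidableEq ι]

lemma sum_stdAddChar_comp_eq_zero {φ : (ι → ZMod 3) →+ ZMod 3} (hφ : φ ≠ 0) :
    ∑ σ, (ZMod.stdAddChar (φ σ) : ℂ) = 0 := by
  refine (AddChar.sum_eq_zero_iff_ne_zero (ψ := ZMod.stdAddChar.compAddMonoidHom φ)).2 fun h ↦ ?_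
  refine hφ (AddMonoidHom.ext fun σ ↦ ZMod.injective_stdAddChar ?_)
  simpa using DFunLike.congr_fun h σ

/-- If `p.1 ≠ q.1` then `σ p.1` enters the total phase with coefficient `-1` or `-2`, neither of
which vanishes modulo `3`; if `p.1 = q.1` then `σ p.2` enters it with coefficient `1`. -/
lemma sum_phaseVec_mul {p q : ι × ι} (hp : p.1 ≠ p.2) (hq : q.1 ≠ q.2) :
    ∑ σ, star (phaseVec σ p.1) * phaseVec σ p.2 * star (star (phaseVec σ q.1) * phaseVec σ q.2) =
      if p = q then (Fintype.card (ι → ZMod 3) : ℂ) else 0 := by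
  split_ifs with h
  · subst h
    have (σ : ι → ZMod 3) : star (phaseVec σ p.1) * phaseVec σ p.2 *
        star (star (phaseVec σ p.1) * phaseVec σ p.2) = 1 := by
      rw [star_mul', star_star]
      linear_combination star (phaseVec σ p.1) * phaseVec σ p.1 * star_phaseVec_mul_self σ p.2 +
        star_phaseVec_mul_self σ p.1
    rw [Finset.sum_congr rfl fun σ _ ↦ this σ, Finset.sum_const, nsmul_one, Finset.card_univ]
  · let ev : ι → (ι → ZMod 3) →+ ZMod 3 := Pi.evalAddMonoidHom fun _ ↦ ZMod 3
    let φ := ev p.2 - ev p.1 + (ev q.1 - ev q.2)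
    have hφ : φ ≠ 0 := by
      intro h0
      rcases eq_or_ne p.1 q.1 with h1 | h1
      · have h2 : p.2 ≠ q.2 := fun h2 ↦ h (Prod.ext h1 h2)
        simpa [φ, ev, hp, ← h1, h2.symm] using DFunLike.congr_fun h0 (Pi.single p.2 1)
      · have hi := DFunLike.congr_fun h0 (Pi.single p.1 1)
        rcases eq_or_ne p.1 q.2 with h2 | h2
        · have : (-1 + -1 : ZMod 3) = 0 := by simpa [φ, ev, hp.symm, h1.symm, ← h2] using hi
          exact absurd this (by decide)
        · simp [φ, ev, hp.symm, h1.symm, h2.symm] at hi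
    rw [← sum_stdAddChar_comp_eq_zero hφ]
    refine Finset.sum_congr rfl fun σ _ ↦ ?_
    have hφσ : φ σ = σ p.2 + -σ p.1 + (σ q.1 + -σ q.2) := by simp [φ, ev, sub_eq_add_neg]
    simp only [hφσ, phaseVec, star_mul', Complex.star_def, Complex.conj_conj,
      AddChar.map_add_eq_mul, AddChar.map_neg_eq_conj]
    ring

lemma sum_norm_phaseVec_sub_trace_sq (C : Matrix ι ι ℂ) :
    ∑ σ : ι → ZMod 3, ‖star (phaseVec σ) ⬝ᵥ C *ᵥ phaseVec σ - C.trace‖ ^ 2 =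
      Fintype.card (ι → ZMod 3) * ∑ p ∈ Finset.univ.offDiag, ‖C p.1 p.2‖ ^ 2 := by
  refine Complex.ofReal_injective ?_
  have hsq (z : ℂ) : ((‖z‖ : ℝ) : ℂ) ^ 2 = z * star z := (Complex.mul_conj' z).symm
  push_cast
  simp only [hsq, star_phaseVec_dotProduct_sub_trace, star_sum, Finset.sum_mul_sum]
  rw [Finset.sum_comm, Finset.mul_sum]
  refine Finset.sum_congr rfl fun p hp ↦ ?_
  rw [Finset.sum_comm]
  calc _ = ∑ q ∈ Finset.univ.offDiag, C p.1 p.2 * star (C q.1 q.2) *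
        if p = q then (Fintype.card (ι → ZMod 3) : ℂ) else 0 := by
        refine Finset.sum_congr rfl fun q hq ↦ ?_
        rw [← sum_phaseVec_mul (Finset.mem_offDiag.1 hp).2.2
          (Finset.mem_offDiag.1 hq).2.2, Finset.mul_sum]
        refine Finset.sum_congr rfl fun σ _ ↦ ?_
        rw [star_mul']
        ring
    _ = _ := by simp [hp, mul_comm]

lemma sum_norm_phaseVec_sub_trace_sq_le {C : Matrix ι ι ℂ} (hC : C.IsHermitian) :
    ∑ σ : ι → ZMod 3, ‖star (phaseVec σ) ⬝ᵥ C *ᵥ phaseVec σ - C.trace‖ ^ 2 ≤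
      Fintype.card (ι → ZMod 3) * (C * C).trace.re := by
  rw [sum_norm_phaseVec_sub_trace_sq, trace_mul_self_re_eq_sum hC]
  gcongr
  exact Finset.subset_univ _

end RandomPhases

section Barrier

variable {ι : Type*} [Fintype ι]

/-- Compressing `B` along `w` lowers its trace by enough to pay, up to the allowance `τ * M`, for
the increase `τ tr B²` of the trace that a shift causes. -/
def Compensates (τ M : ℝ) (B : Matrix ι ι ℂ) (w : ι → ℂ) : Prop :=
  (compress B w).trace.re + τ * (B * B).trace.re ≤ B.trace.re + τ * M

lemma form_mul_self_sub_nonpos_of_not_compensates {τ M : ℝ} (hτ : 0 ≤ τ) (hM : 0 ≤ M)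
    {B : Matrix ι ι ℂ} (hB : 0 ≤ B) {w : ι → ℂ} (h : ¬Compensates τ M B w) :
    M < (B * B).trace.re ∧ (star w ⬝ᵥ (B * B - (τ * (B * B).trace.re) • B) *ᵥ w).re ≤ 0 := by
  rw [Compensates, trace_compress, not_le, Complex.sub_re] at h
  have hform : star w ⬝ᵥ (B * B) *ᵥ w = star (B *ᵥ w) ⬝ᵥ B *ᵥ w := by
    rw [star_mulVec, hB.posSemidef.isHermitian.eq, ← dotProduct_mulVec, mulVec_mulVec]
  have hnull := hB.posSemidef.dotProduct_mulVec_zero_iff w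
  obtain ⟨q, hq, hq_eq⟩ :=
    RCLike.nonneg_iff_exists_ofReal.1 (hB.posSemidef.dotProduct_mulVec_nonneg w)
  obtain ⟨r, hr, hr_eq⟩ :=
    RCLike.nonneg_iff_exists_ofReal.1 (dotProduct_star_self_nonneg (B *ᵥ w))
  simp only [Complex.coe_algebraMap] at hq_eq hr_eq
  rw [sub_mulVec, smul_mulVec, dotProduct_sub, dotProduct_smul, hform, Complex.sub_re,
    Complex.smul_re, ← hq_eq, ← hr_eq]
  rw [← hq_eq, ← hr_eq, ← Complex.ofReal_inv, ← Complex.ofReal_mul, Complex.ofReal_re] at h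
  have hratio : 0 ≤ q⁻¹ * r := mul_nonneg (inv_nonneg.2 hq) hr
  have hr_mul : q * (q⁻¹ * r) = r := by
    rcases eq_or_ne q 0 with rfl | hq0
    · have hBw : B *ᵥ w = 0 := hnull.1 (by rw [← hq_eq, Complex.ofReal_zero])
      have : r = 0 := by simpa [hBw] using hr_eq
      rw [this, mul_zero, mul_zero]
    · exact mul_inv_cancel_left₀ hq0 r
  refine ⟨lt_of_mul_lt_mul_left (by linarith) hτ, ?_⟩
  rw [Complex.ofReal_re, Complex.ofReal_re, smul_eq_mul, ← hr_mul]
  nlinarith [mul_nonneg hτ hM]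

variable [DecidableEq ι]

lemma trace_mul_self_le_mul_trace {L : ℝ} {B : Matrix ι ι ℂ} (hB : 0 ≤ B) (hBL : B ≤ L • 1) :
    (B * B).trace.re ≤ L * B.trace.re := by
  have := trace_mul_re_nonneg hB (sub_nonneg.2 hBL)
  rw [Matrix.mul_sub, Matrix.mul_smul, Matrix.mul_one, trace_sub, trace_smul, Complex.sub_re,
    Complex.smul_re, smul_eq_mul] at this
  linarith

lemma trace_sq_mul_self_sub_smul_le {L s : ℝ} {B : Matrix ι ι ℂ} (hB : 0 ≤ B) (hBL : B ≤ L • 1)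
    (hs : 0 ≤ s) (hsL : s ≤ L) :
    ((B * B - s • B) * (B * B - s • B)).trace.re ≤ L ^ 2 * (B * B).trace.re := by
  have hB_sa : IsSelfAdjoint B := hB.isSelfAdjoint
  have hBH : B.IsHermitian := hB_sa
  have hcont := continuousOn_spectrum B
  have hsq : B * B = cfc (fun b : ℝ ↦ b ^ 2) B := by rw [cfc_pow_id .., sq]
  have hcfc : (B * B - s • B) * (B * B - s • B) = cfc (fun b : ℝ ↦ (b ^ 2 - s * b) ^ 2) B := by
    rw [cfc_pow _ _ _ (hcont _), cfc_sub _ _ _ (hcont _) (hcont _), ← hsq, cfc_const_mul_id .., sq]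
  rw [hcfc, hsq, trace_cfc_re hBH, trace_cfc_re hBH, Finset.mul_sum]
  refine Finset.sum_le_sum fun i _ ↦ ?_
  have hmem := hBH.eigenvalues_mem_spectrum_real i
  rw [← Algebra.algebraMap_eq_smul_one] at hBL
  have h0 : 0 ≤ hBH.eigenvalues i := spectrum_nonneg_of_nonneg hB hmem
  have hL : hBH.eigenvalues i ≤ L := (le_algebraMap_iff_spectrum_le hB_sa).1 hBL _ hmem
  calc (hBH.eigenvalues i ^ 2 - s * hBH.eigenvalues i) ^ 2
      = (hBH.eigenvalues i - s) ^ 2 * hBH.eigenvalues i ^ 2 := by ring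
    _ ≤ L ^ 2 * hBH.eigenvalues i ^ 2 := by
      gcongr ?_ * _
      exact sq_le_sq' (by linarith) (by linarith)

lemma card_form_nonpos_mul_sq_le {C : Matrix ι ι ℂ} (hC : C.IsHermitian) {t : ℝ} (ht : 0 ≤ t)
    (htC : t ≤ C.trace.re) :
    (Finset.card {σ : ι → ZMod 3 | (star (phaseVec σ) ⬝ᵥ C *ᵥ phaseVec σ).re ≤ 0} : ℝ) * t ^ 2 ≤
      Fintype.card (ι → ZMod 3) * (C * C).trace.re := by
  refine le_trans ?_ (sum_norm_phaseVec_sub_trace_sq_le hC)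
  rw [← nsmul_eq_mul]
  refine (Finset.card_nsmul_le_sum _ _ _ fun σ hσ ↦ ?_).trans
    (Finset.sum_le_sum_of_subset_of_nonneg (Finset.filter_subset _ _) fun _ _ _ ↦ sq_nonneg _)
  have hσ := (Finset.mem_filter.1 hσ).2
  have := (neg_le_abs _).trans
    (Complex.abs_re_le_norm (star (phaseVec σ) ⬝ᵥ C *ᵥ phaseVec σ - C.trace))
  rw [Complex.sub_re] at this
  gcongr
  linarith

variable {τ L M ε : ℝ}

open Classical in
lemma card_not_compensates_le (hτ : 0 ≤ τ) (hL : 0 ≤ L) (hM : 0 < M) (hε : 0 < ε)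
    {B : Matrix ι ι ℂ} (hB : 0 ≤ B) (hBL : B ≤ L • 1) (htr : τ * B.trace.re ≤ 1 - ε) :
    (Finset.card {σ : ι → ZMod 3 | ¬Compensates τ M B (phaseVec σ)} : ℝ) ≤
      L ^ 2 / (ε ^ 2 * M) * Fintype.card (ι → ZMod 3) := by
  set Ψ := (B * B).trace.re with hΨ
  rcases le_or_gt Ψ M with hΨM | hΨM
  · have : ∀ σ : ι → ZMod 3, Compensates τ M B (phaseVec σ) := fun σ ↦ by_contra fun h ↦
      hΨM.not_gt (form_mul_self_sub_nonpos_of_not_compensates hτ hM.le hB h).1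
    simp only [this, not_true_eq_false, Finset.filter_false, Finset.card_empty, Nat.cast_zero]
    positivity
  have hΨ0 : 0 < Ψ := hM.trans hΨM
  have hsL : τ * Ψ ≤ L := by
    nlinarith [mul_le_mul_of_nonneg_left (trace_mul_self_le_mul_trace hB hBL) hτ,
      mul_le_mul_of_nonneg_left htr hL, mul_nonneg hL hε.le]
  set C := B * B - (τ * Ψ) • B with hC
  have hCH : C.IsHermitian := by
    have hBH := hB.posSemidef.isHermitian
    rw [hC, IsHermitian, conjTranspose_sub, conjTranspose_mul, conjTranspose_smul, hBH.eq,
      star_trivial]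
  have htrC : ε * Ψ ≤ C.trace.re := by
    rw [hC, trace_sub, trace_smul, Complex.sub_re, Complex.smul_re, smul_eq_mul, ← hΨ]
    nlinarith
  have hcheb := card_form_nonpos_mul_sq_le hCH (by positivity) htrC
  have hvar := trace_sq_mul_self_sub_smul_le hB hBL (by positivity) hsL
  have hsub : (Finset.card {σ : ι → ZMod 3 | ¬Compensates τ M B (phaseVec σ)} : ℝ) ≤
      Finset.card {σ : ι → ZMod 3 | (star (phaseVec σ) ⬝ᵥ C *ᵥ phaseVec σ).re ≤ 0} := by
    gcongr with σ
    exact fun h ↦ (form_mul_self_sub_nonpos_of_not_compensates hτ hM.le hB h).2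
  refine hsub.trans ?_
  have hcard := hcheb.trans (mul_le_mul_of_nonneg_left hvar (Nat.cast_nonneg _))
  rw [div_mul_eq_mul_div, le_div_iff₀ (by positivity)]
  refine le_of_mul_le_mul_right ?_ hΨ0
  calc _ ≤ _ * (ε * Ψ) ^ 2 := by
        rw [mul_assoc, mul_pow, mul_assoc, sq Ψ]
        gcongr
    _ ≤ _ := hcard
    _ = _ := by ring

end Barrier

section IsBarrier

variable {ι : Type*} [Fintype ι]

/-- If `B` inverts `Q` on the range of an isometry `J : ℂ^κ → ℂ^ι` orthogonal to all the vectors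
`w i`, then the compression of `Q + T` by `J` is at least `s`. -/
def IsBarrier (κ : Type*) [Fintype κ] [DecidableEq κ] {m : ℕ} (w : Fin m → ι → ℂ)
    (B T : Matrix ι ι ℂ) (s : ℝ) : Prop :=
  ∀ (Q : Matrix ι ι ℂ) (J : Matrix ι κ ℂ), Jᴴ * J = 1 → B * (Q * J) = J →
    (∀ i, star (w i) ᵥ* J = 0) → s • 1 ≤ Jᴴ * (Q + T) * J

variable (κ : Type*) [Fintype κ] [DecidableEq κ]

lemma isBarrier_zero {B : Matrix ι ι ℂ} (hB : 0 ≤ B) (w : Fin 0 → ι → ℂ) :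
    IsBarrier κ w B 0 0 := by
  intro Q J _ hJ _
  have : Jᴴ * Q * J = (Q * J)ᴴ * B * (Q * J) := by
    nth_rw 1 [← hJ]
    rw [conjTranspose_mul, hB.posSemidef.isHermitian.eq, Matrix.mul_assoc]
  rw [zero_smul, add_zero, this]
  exact conjTranspose_mul_mul_nonneg hB _

variable {κ}

lemma IsBarrier.mono {m : ℕ} {w : Fin m → ι → ℂ} {B T : Matrix ι ι ℂ} {s s' : ℝ}
    (h : IsBarrier κ w B T s) (hs : s' ≤ s) : IsBarrier κ w B T s' := fun Q J hJ hBJ hw ↦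
  (smul_le_smul_of_nonneg_right hs zero_le_one).trans (h Q J hJ hBJ hw)

variable [DecidableEq ι]

lemma IsBarrier.cons {B B' T T' : Matrix ι ι ℂ} {w₀ : ι → ℂ} {m : ℕ} {w : Fin m → ι → ℂ} {δ s : ℝ}
    (h : IsBarrier κ w B' T' s)
    (hstep : ∀ (Q : Matrix ι ι ℂ) (J : Matrix ι κ ℂ), B * (Q * J) = J → star w₀ ᵥ* J = 0 →
      B' * ((Q + T - δ • 1) * J) = J) :
    IsBarrier κ (Fin.cons w₀ w : Fin (m + 1) → ι → ℂ) B (T + T') (s + δ) := by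
  intro Q J hJ hBJ hw
  have := h _ J hJ (hstep Q J hBJ (hw 0)) fun i ↦ hw i.succ
  have hsplit : Jᴴ * (Q + T - δ • 1 + T') * J = Jᴴ * (Q + (T + T')) * J - δ • 1 := by
    have : Q + T - δ • 1 + T' = Q + (T + T') - δ • 1 := by abel
    rw [this, Matrix.mul_sub, Matrix.sub_mul, Matrix.mul_smul, Matrix.smul_mul, Matrix.mul_one, hJ]
  rw [hsplit, le_sub_iff_add_le, ← add_smul] at this
  exact this

variable {τ L M ε : ℝ}

open Classical in
lemma exists_barrier_step (hτ : 0 ≤ τ) (hL : 0 < L) (hM : 0 ≤ M) {B : Matrix ι ι ℂ} (hB : 0 ≤ B)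
    (hBL : B ≤ L • 1) (w : ι → ℂ) (κ : Type*) :
    ∃ B' T : Matrix ι ι ℂ, 0 ≤ B' ∧ B' ≤ L • 1 ∧ 0 ≤ T ∧
      B'.trace.re + L ^ 2 * T.trace.re ≤ B.trace.re + τ * M ∧
      ∀ (Q : Matrix ι ι ℂ) (J : Matrix ι κ ℂ), B * (Q * J) = J → star w ᵥ* J = 0 →
        B' * ((Q + T - (if Compensates τ M B w then shift τ L else 0 : ℝ) • 1) * J) = J := by
  have hle := compress_le hB w
  have hnonneg := compress_nonneg hB w
  have hBH : B.IsHermitian := hB.posSemidef.isHermitian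
  split_ifs with hw
  · obtain ⟨B', T, hB', hB'L, hT, hinv, hcost⟩ :=
      exists_shift_truncate hτ hL hnonneg (hle.trans hBL)
    refine ⟨B', T, hB', hB'L, hT, ?_, fun Q J hJ hwJ ↦ ?_⟩
    · have hsq := mul_le_mul_of_nonneg_left (trace_mul_self_re_mono hnonneg hle) hτ
      have : (compress B w).trace.re + τ * (B * B).trace.re ≤ B.trace.re + τ * M := hw
      linarith
    · have hcJ := compress_mul_eq_of_vecMul_eq_zero hBH hJ hwJ
      calc B' * ((Q + T - shift τ L • 1) * J)
          = B' * (Q * J + (T - shift τ L • 1) * (compress B w * (Q * J))) := by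
            rw [hcJ, ← Matrix.add_mul, add_sub_assoc]
        _ = B' * (1 + (T - shift τ L • 1) * compress B w) * (Q * J) := by
            simp only [Matrix.mul_add, Matrix.add_mul, Matrix.mul_assoc, Matrix.one_mul]
        _ = J := by rw [hinv, hcJ]
  · refine ⟨compress B w, 0, hnonneg, hle.trans hBL, le_rfl, ?_, fun Q J hJ hwJ ↦ ?_⟩
    · rw [trace_zero, Complex.zero_re, mul_zero, add_zero]
      linarith [trace_re_mono hle, mul_nonneg hτ hM]
    · rw [zero_smul, sub_zero, add_zero, compress_mul_eq_of_vecMul_eq_zero hBH hJ hwJ]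

lemma sum_exp_ite_le {α : Type*} [Fintype α] (P : α → Prop) [DecidablePred P] :
    ∑ a, Real.exp (if P a then 0 else 1 : ℕ) ≤
      Fintype.card α + 2 * (Finset.card {a | ¬P a} : ℝ) := by
  have hexp : ∀ a, Real.exp (if P a then 0 else 1 : ℕ) ≤ 1 + 2 * (if ¬P a then 1 else 0 : ℝ) := by
    intro a
    have := Real.exp_one_lt_three
    by_cases h : P a
    · simp [h]
    · simp only [h, if_false, Nat.cast_one, not_false_eq_true, if_true]
      linarith
  refine (Finset.sum_le_sum fun a _ ↦ hexp a).trans_eq ?_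
  rw [Finset.sum_add_distrib, ← Finset.mul_sum, Finset.sum_boole]
  simp

lemma sum_exp_cons_le {α : Type*} [Fintype α] {m : ℕ} {f : α → ℕ} {g : α → (Fin m → α) → ℕ}
    {b c : ℝ} (hc : 0 ≤ c) (hf : ∑ a, Real.exp (f a) ≤ b) (hg : ∀ a, ∑ σ, Real.exp (g a σ) ≤ c) :
    ∑ σ : Fin (m + 1) → α, Real.exp ((f (σ 0) + g (σ 0) (Fin.tail σ) : ℕ) : ℝ) ≤ b * c := by
  calc ∑ σ : Fin (m + 1) → α, Real.exp ((f (σ 0) + g (σ 0) (Fin.tail σ) : ℕ) : ℝ)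
      = ∑ a, Real.exp (f a) * ∑ σ, Real.exp (g a σ) := by
        rw [← (Fin.consEquiv fun _ : Fin (m + 1) ↦ α).sum_comp, Fintype.sum_prod_type]
        simp [Fin.consEquiv, Real.exp_add, Finset.mul_sum]
    _ ≤ ∑ a, Real.exp (f a) * c := by
        gcongr with a
        exact hg a
    _ ≤ b * c := by
        rw [← Finset.sum_mul]
        gcongr

lemma card_mul_exp_le_sum {α : Type*} [Fintype α] {P : α → Prop} [DecidablePred P] {f : α → ℝ}
    {c : ℝ} (h : ∀ a, P a → c ≤ f a) :
    (Finset.card {a | P a} : ℝ) * Real.exp c ≤ ∑ a, Real.exp (f a) := by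
  rw [← nsmul_eq_mul]
  exact (Finset.card_nsmul_le_sum _ _ _ fun a ha ↦
    Real.exp_le_exp.2 (h a (Finset.mem_filter.1 ha).2)).trans
    (Finset.sum_le_sum_of_subset_of_nonneg (Finset.filter_subset _ _) fun _ _ _ ↦
      (Real.exp_pos _).le)

theorem exists_barrier (κ : Type*) [Fintype κ] [DecidableEq κ] (hτ : 0 ≤ τ) (hL : 0 < L)
    (hM : 0 < M) (hε : 0 < ε) (m : ℕ) {B : Matrix ι ι ℂ} (hB : 0 ≤ B) (hBL : B ≤ L • 1)
    (htr : τ * (B.trace.re + m * (τ * M)) ≤ 1 - ε) :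
    ∃ (T : (Fin m → ι → ZMod 3) → Matrix ι ι ℂ) (fail : (Fin m → ι → ZMod 3) → ℕ),
      (∀ σ, 0 ≤ T σ ∧ L ^ 2 * (T σ).trace.re ≤ B.trace.re + m * (τ * M) ∧
        IsBarrier κ (fun i ↦ phaseVec (σ i)) B (T σ) ((m - fail σ) * shift τ L)) ∧
      ∑ σ, Real.exp (fail σ) ≤
        ((1 + 2 * (L ^ 2 / (ε ^ 2 * M))) * Fintype.card (ι → ZMod 3)) ^ m := by
  classical
  induction m generalizing B with
  | zero =>
    refine ⟨0, 0, fun σ ↦ ⟨le_rfl, ?_, ?_⟩, by simp⟩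
    · simpa using trace_re_nonneg hB
    · simpa using isBarrier_zero κ hB _
  | succ m ih =>
    choose B' T₀ hB' hB'L hT₀ hcost hstep using
      fun σ : ι → ZMod 3 ↦ exists_barrier_step hτ hL hM.le hB hBL (phaseVec σ) κ
    have hT₀_tr : ∀ σ, 0 ≤ L ^ 2 * (T₀ σ).trace.re := fun σ ↦
      mul_nonneg (sq_nonneg L) (trace_re_nonneg (hT₀ σ))
    rw [Nat.cast_succ] at htr
    choose T fail hT hfail using fun σ ↦ ih (hB' σ) (hB'L σ) (by
      refine (mul_le_mul_of_nonneg_left ?_ hτ).trans htr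
      linarith [hcost σ, hT₀_tr σ])
    refine ⟨fun σ ↦ T₀ (σ 0) + T (σ 0) (Fin.tail σ), fun σ ↦
      (if Compensates τ M B (phaseVec (σ 0)) then 0 else 1) + fail (σ 0) (Fin.tail σ),
      fun σ ↦ ⟨add_nonneg (hT₀ _) (hT _ _).1, ?_, ?_⟩, ?_⟩
    · have := (hT (σ 0) (Fin.tail σ)).2.1
      rw [trace_add, Complex.add_re, Nat.cast_succ]
      linarith [hcost (σ 0)]
    · have hcons := (hT (σ 0) (Fin.tail σ)).2.2.cons (hstep (σ 0))
      convert hcons using 1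
      · ext i : 1
        cases i using Fin.cases <;> rfl
      · by_cases h : Compensates τ M B (phaseVec (σ 0)) <;> simp only [h, if_true, if_false] <;>
          push_cast <;> ring
    · have hfirst : τ * B.trace.re ≤ 1 - ε := by
        refine (mul_le_mul_of_nonneg_left ?_ hτ).trans htr
        exact le_add_of_nonneg_right (by positivity)
      have hcard := card_not_compensates_le hτ hL.le hM hε hB hBL hfirst
      have hbit : ∑ σ : ι → ZMod 3, Real.exp (if Compensates τ M B (phaseVec σ) then 0 else 1 : ℕ) ≤
          (1 + 2 * (L ^ 2 / (ε ^ 2 * M))) * Fintype.card (ι → ZMod 3) :=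
        (sum_exp_ite_le _).trans (by linarith)
      have hsum := sum_exp_cons_le (by positivity) hbit hfail
      rw [pow_succ']
      exact hsum

open Classical in
theorem card_not_exists_isBarrier_le (κ : Type*) [Fintype κ] [DecidableEq κ] (hτ : 0 ≤ τ)
    (hL : 0 < L) (hε : 0 < ε) (hM : 4 * L ^ 2 ≤ ε ^ 3 * M) (m : ℕ) {B : Matrix ι ι ℂ} (hB : 0 ≤ B)
    (hBL : B ≤ L • 1) (htr : τ * (B.trace.re + m * (τ * M)) ≤ 1 - ε) :
    (Finset.card {σ : Fin m → ι → ZMod 3 | ¬∃ T, 0 ≤ T ∧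
      L ^ 2 * T.trace.re ≤ B.trace.re + m * (τ * M) ∧
        IsBarrier κ (fun i ↦ phaseVec (σ i)) B T ((1 - ε) * m * shift τ L)} : ℝ) ≤
      Real.exp (-(ε * m / 2)) * Fintype.card (Fin m → ι → ZMod 3) := by
  have hM0 : 0 < M := pos_of_mul_pos_right (lt_of_lt_of_le (by positivity) hM) (by positivity)
  obtain ⟨T, fail, hT, hfail⟩ := exists_barrier κ hτ hL hM0 hε m hB hBL htr
  have hp : 2 * (L ^ 2 / (ε ^ 2 * M)) ≤ ε / 2 := by
    rw [← mul_div_assoc, div_le_div_iff₀ (by positivity) two_pos]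
    linarith
  have hmany : ∀ σ, (¬∃ T, 0 ≤ T ∧ L ^ 2 * T.trace.re ≤ B.trace.re + m * (τ * M) ∧
      IsBarrier κ (fun i ↦ phaseVec (σ i)) B T ((1 - ε) * m * shift τ L)) → ε * m ≤ fail σ := by
    intro σ hσ
    by_contra! hlt
    refine hσ ⟨T σ, (hT σ).1, (hT σ).2.1, (hT σ).2.2.mono ?_⟩
    have : 0 ≤ shift τ L := by unfold shift; positivity
    gcongr
    linarith
  have hmarkov := card_mul_exp_le_sum hmany
  have hexp : (1 + 2 * (L ^ 2 / (ε ^ 2 * M))) ^ m ≤ Real.exp (ε * m / 2) := by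
    calc _ ≤ (Real.exp (ε / 2)) ^ m := by
          gcongr
          linarith [Real.add_one_le_exp (ε / 2)]
      _ = Real.exp (ε * m / 2) := by rw [← Real.exp_nat_mul]; ring_nf
  rw [mul_pow] at hfail
  refine le_of_mul_le_mul_right ?_ (Real.exp_pos (ε * m))
  calc _ ≤ _ := hmarkov.trans hfail
    _ ≤ Real.exp (ε * m / 2) * Fintype.card (ι → ZMod 3) ^ m := by gcongr
    _ = Real.exp (-(ε * m / 2)) * Fintype.card (Fin m → ι → ZMod 3) * Real.exp (ε * m) := by
      rw [Fintype.card_fun (α := Fin m), Fintype.card_fin, mul_right_comm, ← Real.exp_add]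
      push_cast
      ring_nf

end IsBarrier

section Measurability

lemma measurableSet_setOf_exists_of_isClosed {α β : Type*} [TopologicalSpace α] [T2Space α]
    [MeasurableSpace α] [BorelSpace α] [TopologicalSpace β] [SigmaCompactSpace (α × β)]
    {P : α → β → Prop} (hP : IsClosed {p : α × β | P p.1 p.2}) :
    MeasurableSet {a | ∃ b, P a b} := by
  obtain ⟨K, hK, hKP⟩ := isSigmaCompact_univ.of_isClosed_subset hP (Set.subset_univ _)
  have : {a | ∃ b, P a b} = ⋃ i, Prod.fst '' K i := by
    rw [← Set.image_iUnion, hKP]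
    ext
    simp
  rw [this]
  exact .iUnion fun i ↦ ((hK i).image continuous_fst).measurableSet

variable {m ι κ : Type*}

instance borelSpace_matrix [Countable m] [Countable κ] : BorelSpace (Matrix m κ ℂ) :=
  inferInstanceAs (BorelSpace (m → κ → ℂ))

instance sigmaCompactSpace_matrix [Finite m] [Finite κ] : SigmaCompactSpace (Matrix m κ ℂ) :=
  have := Fintype.ofFinite m
  have := Fintype.ofFinite κ
  inferInstanceAs (SigmaCompactSpace (m → κ → ℂ))

open scoped Matrix.Norms.L2Operator in
instance orderClosedTopology_matrix [Finite ι] : OrderClosedTopology (Matrix ι ι ℂ) := by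
  classical
  have := Fintype.ofFinite ι
  infer_instance

variable [Fintype ι] [DecidableEq ι]

/-- `A` is at most `K` up to a positive semidefinite perturbation of trace at most `R`. -/
def NearlyLE (A : Matrix ι ι ℂ) (K R : ℝ) : Prop :=
  ∃ T : Matrix ι ι ℂ, A ≤ K • 1 + T ∧ 0 ≤ T ∧ T.trace.re ≤ R

/-- The resolvent `(z - A)⁻¹` exists, is positive semidefinite and bounded by `L`, and has trace at
most `G`. -/
def HasResolventLE (A : Matrix ι ι ℂ) (z L G : ℝ) : Prop :=
  ∃ B : Matrix ι ι ℂ, B * (z • 1 - A) = 1 ∧ 0 ≤ B ∧ B ≤ L • 1 ∧ B.trace.re ≤ G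

lemma measurableSet_nearlyLE (K R : ℝ) :
    MeasurableSet {A : Matrix ι ι ℂ | NearlyLE A K R} := by
  refine measurableSet_setOf_exists_of_isClosed (.and ?_ (.and ?_ ?_)) <;>
  exact isClosed_le (by fun_prop) (by fun_prop)

lemma measurableSet_hasResolventLE (z L G : ℝ) :
    MeasurableSet {A : Matrix ι ι ℂ | HasResolventLE A z L G} := by
  refine measurableSet_setOf_exists_of_isClosed (.and ?_ (.and ?_ (.and ?_ ?_)))
  · exact isClosed_eq (by fun_prop) (by fun_prop)
  all_goals exact isClosed_le (by fun_prop) (by fun_prop)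

lemma measurableSet_SEP (n d : ℕ) : MeasurableSet (SEP n d) := by
  have hSEP : SEP n d = ⋃ k : ℕ, {X | ∃ p : (Fin k → Matrix (Fin n) (Fin n) ℂ) ×
      (Fin k → Matrix (Fin d) (Fin d) ℂ),
      (∀ i, 0 ≤ p.1 i) ∧ (∀ i, 0 ≤ p.2 i) ∧ X = ∑ i, p.1 i ⊗ₖ p.2 i} := by
    ext
    simp [SEP, nonneg_iff_posSemidef]
  rw [hSEP]
  refine .iUnion fun k ↦ measurableSet_setOf_exists_of_isClosed (.and ?_ (.and ?_ ?_))
  · simp only [Set.ofPred_forall]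
    exact isClosed_iInter fun i ↦ isClosed_le (by fun_prop) (by fun_prop)
  · simp only [Set.ofPred_forall]
    exact isClosed_iInter fun i ↦ isClosed_le (by fun_prop) (by fun_prop)
  · refine isClosed_eq (by fun_prop) (continuous_finsetSum _ fun i _ ↦ ?_)
    refine continuous_matrix fun a b ↦ ?_
    simp only [kroneckerMap_apply]
    fun_prop

end Measurability

section RandomRotation

open scoped InnerProductSpace

lemma exists_linearIsometry_of_finrank_le {𝕜 E F : Type*} [RCLike 𝕜] [NormedAddCommGroup E]
    [InnerProductSpace 𝕜 E] [FiniteDimensional 𝕜 E] [NormedAddCommGroup F] [InnerProductSpace 𝕜 F]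
    [FiniteDimensional 𝕜 F] (h : Module.finrank 𝕜 E ≤ Module.finrank 𝕜 F) :
    Nonempty (E →ₗᵢ[𝕜] F) := by
  have hF := (stdOrthonormalBasis 𝕜 F).orthonormal.comp _ (Fin.castLE_injective h)
  set b := stdOrthonormalBasis 𝕜 E
  set f : E →ₗ[𝕜] F := b.toBasis.constr 𝕜 (stdOrthonormalBasis 𝕜 F ∘ Fin.castLE h)
  have hfb : ⇑f ∘ b.toBasis = stdOrthonormalBasis 𝕜 F ∘ Fin.castLE h :=
    funext fun i ↦ b.toBasis.constr_basis 𝕜 _ i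
  exact ⟨f.isometryOfOrthonormal (v := b.toBasis) (by simp [b.orthonormal]) (hfb ▸ hF)⟩

variable {ι κ : Type*} [Fintype ι] [Fintype κ]

lemma exists_linearIsometry_orthogonal {m : ℕ} (hm : m + Fintype.card κ ≤ Fintype.card ι)
    (w : Fin m → EuclideanSpace ℂ ι) :
    ∃ a : EuclideanSpace ℂ κ →ₗᵢ[ℂ] EuclideanSpace ℂ ι, ∀ i x, ⟪w i, a x⟫_ℂ = 0 := by
  set W := Submodule.span ℂ (Set.range w)
  have hW : Module.finrank ℂ W ≤ m := (finrank_range_le_card w).trans_eq (Fintype.card_fin m)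
  have hW' := W.finrank_add_finrank_orthogonal
  rw [finrank_euclideanSpace] at hW'
  obtain ⟨a⟩ := exists_linearIsometry_of_finrank_le (𝕜 := ℂ) (E := EuclideanSpace ℂ κ) (F := Wᗮ)
    (by rw [finrank_euclideanSpace]; omega)
  exact ⟨Wᗮ.subtypeₗᵢ.comp a, fun i x ↦
    (Submodule.mem_orthogonal _ _).1 (a x).2 _ (Submodule.subset_span ⟨i, rfl⟩)⟩

variable [DecidableEq κ]

lemma conjTranspose_mul_self_eq_one_iff {A : Matrix ι κ ℂ} :
    Aᴴ * A = 1 ↔ ∀ x y, ⟪toEuclideanLin A x, toEuclideanLin A y⟫_ℂ = ⟪x, y⟫_ℂ := by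
  classical
  have hinner : ∀ x y, ⟪toEuclideanLin A x, toEuclideanLin A y⟫_ℂ =
      ⟪x, toEuclideanLin (Aᴴ * A) y⟫_ℂ := by
    intro x y
    rw [← LinearMap.adjoint_inner_right, ← toEuclideanLin_conjTranspose_eq_adjoint]
    simp [toEuclideanLin, toLpLin_apply]
  simp only [hinner]
  constructor
  · intro h x y
    simp [h]
  · intro h
    apply toEuclideanLin.injective
    refine LinearMap.ext fun y ↦ ext_inner_left ℂ fun x ↦ ?_
    rw [h, toEuclideanLin, toLpLin_one, LinearMap.id_apply]

lemma exists_unitary_vecMul_eq_zero [DecidableEq ι] {m : ℕ}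
    (hm : m + Fintype.card κ ≤ Fintype.card ι) {J : Matrix ι κ ℂ} (hJ : Jᴴ * J = 1)
    (w : Fin m → ι → ℂ) :
    ∃ V ∈ unitary (Matrix ι ι ℂ), ∀ i, star (w i) ᵥ* (star V * J) = 0 := by
  obtain ⟨a, ha⟩ := exists_linearIsometry_orthogonal (κ := κ) hm fun i ↦ WithLp.toLp 2 (w i)
  set j : EuclideanSpace ℂ κ →ₗᵢ[ℂ] EuclideanSpace ℂ ι :=
    (toEuclideanLin J).isometryOfInner (conjTranspose_mul_self_eq_one_iff.1 hJ)
  set U := (j.comp a.equivRange.symm.toLinearIsometry).extend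
  have hUa : ∀ x, U (a x) = j x := by
    intro x
    have := (j.comp a.equivRange.symm.toLinearIsometry).extend_apply (a.equivRange x)
    simpa using this
  set V := toEuclideanLin.symm U.toLinearMap
  have hV : ∀ x, toEuclideanLin V x = U x := fun x ↦ by simp [V]
  refine ⟨V, mem_unitaryGroup_iff'.2 (conjTranspose_mul_self_eq_one_iff.2 fun x y ↦ ?_),
    fun i ↦ funext fun k ↦ ?_⟩
  · rw [hV, hV, U.inner_map_map]
  · have hk : ⟪U (WithLp.toLp 2 (w i)), j (EuclideanSpace.single k 1)⟫_ℂ = 0 := by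
      rw [← hUa, U.inner_map_map, ha]
    rw [star_eq_conjTranspose, ← vecMul_vecMul, ← star_mulVec]
    change star (V *ᵥ w i) ⬝ᵥ J.col k = 0
    simpa [← hV, j, EuclideanSpace.inner_eq_star_dotProduct, dotProduct_comm] using hk

end RandomRotation

section NearlyLE

variable {ι κ : Type*} [Fintype ι]

lemma trace_conjTranspose_mul_mul_re_le [Fintype κ] [DecidableEq κ] {T : Matrix ι ι ℂ}
    (hT : 0 ≤ T) {A : Matrix ι κ ℂ} (hA : Aᴴ * A = 1) : (Aᴴ * T * A).trace.re ≤ T.trace.re := by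
  classical
  have hproj : 1 - A * Aᴴ = (1 - A * Aᴴ)ᴴ * (1 - A * Aᴴ) := by
    have : A * Aᴴ * (A * Aᴴ) = A * Aᴴ := by
      rw [Matrix.mul_assoc, ← Matrix.mul_assoc Aᴴ, hA, Matrix.one_mul]
    simp [Matrix.sub_mul, Matrix.mul_sub, this]
  have := trace_mul_re_nonneg hT (hproj ▸ (posSemidef_conjTranspose_mul_self _).nonneg)
  rw [Matrix.mul_sub, Matrix.mul_one, trace_sub, Complex.sub_re, ← Matrix.mul_assoc,
    trace_mul_cycle] at this
  exact sub_nonneg.1 this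

variable [DecidableEq ι]

lemma NearlyLE.mono {A : Matrix ι ι ℂ} {K K' R R' : ℝ} (h : NearlyLE A K R) (hK : K ≤ K')
    (hR : R ≤ R') : NearlyLE A K' R' := by
  obtain ⟨T, hA, hT, hTR⟩ := h
  refine ⟨T, hA.trans ?_, hT, hTR.trans hR⟩
  gcongr

lemma HasResolventLE.of_conj {A V : Matrix ι ι ℂ} {z L G : ℝ} (hV : V ∈ unitary (Matrix ι ι ℂ))
    (h : HasResolventLE (V * A * star V) z L G) : HasResolventLE A z L G := by
  obtain ⟨B, hBA, hB, hBL, hBG⟩ := h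
  have hV' : star V * V = 1 := Unitary.star_mul_self_of_mem hV
  refine ⟨star V * B * V, ?_, conjTranspose_mul_mul_nonneg hB V, ?_, ?_⟩
  · have : V * (z • 1 - A) = (z • 1 - V * A * star V) * V := by
      simp only [Matrix.mul_sub, Matrix.sub_mul, Matrix.mul_assoc, hV', Matrix.mul_smul,
        Matrix.smul_mul, Matrix.mul_one, Matrix.one_mul]
    rw [Matrix.mul_assoc, this, Matrix.mul_assoc, ← Matrix.mul_assoc B, hBA, Matrix.one_mul, hV']
  · refine (conjTranspose_mul_mul_mono hBL V).trans_eq ?_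
    rw [Matrix.mul_smul, Matrix.smul_mul, Matrix.mul_one, ← star_eq_conjTranspose, hV']
  · rwa [trace_mul_cycle, Unitary.mul_star_self_of_mem hV, Matrix.one_mul]

variable [Fintype κ] [DecidableEq κ]

lemma IsBarrier.nearlyLE {m : ℕ} {w : Fin m → ι → ℂ} {B T X : Matrix ι ι ℂ} {s z : ℝ}
    (h : IsBarrier κ w B T s) (hBX : B * (z • 1 - X) = 1) (hT : 0 ≤ T) {A : Matrix ι κ ℂ}
    (hA : Aᴴ * A = 1) (hw : ∀ i, star (w i) ᵥ* A = 0) :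
    NearlyLE (Aᴴ * X * A) (z - s) T.trace.re := by
  have := h (z • 1 - X) A hA (by rw [← Matrix.mul_assoc, hBX, Matrix.one_mul]) hw
  have hsplit : Aᴴ * (z • 1 - X + T) * A = z • 1 + Aᴴ * T * A - Aᴴ * X * A := by
    simp only [Matrix.mul_add, Matrix.mul_sub, Matrix.add_mul, Matrix.sub_mul, Matrix.mul_smul,
      Matrix.smul_mul, Matrix.mul_one, hA]
    abel
  refine ⟨Aᴴ * T * A, ?_, conjTranspose_mul_mul_nonneg hT A,
    trace_conjTranspose_mul_mul_re_le hT hA⟩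
  rw [hsplit, le_sub_comm, ← sub_add_eq_add_sub, ← sub_smul] at this
  exact this

end NearlyLE

section UnitaryInvariance

lemma measure_le_of_card_le {Ω W : Type*} [MeasurableSpace Ω] (ℙ : Measure Ω)
    [IsProbabilityMeasure ℙ] [Fintype W] [Nonempty W] {A : W → Set Ω}
    [∀ ω w, Decidable (ω ∈ A w)] (hA : ∀ w, MeasurableSet (A w)) {c : ℝ} {q : ENNReal}
    (hq : ∀ w, ℙ (A w) = q)
    (hcard : ∀ ω, (Finset.card {w | ω ∈ A w} : ℝ) ≤ c * Fintype.card W) :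
    q ≤ ENNReal.ofReal c := by
  have hpoint : ∀ ω, ∑ w, (A w).indicator (1 : Ω → ENNReal) ω ≤
      ENNReal.ofReal (c * Fintype.card W) := by
    intro ω
    refine le_trans (Eq.le ?_) (ENNReal.ofReal_le_ofReal (hcard ω))
    simp [Set.indicator_apply]
  have hsum : Fintype.card W * q ≤ Fintype.card W * ENNReal.ofReal c := by
    calc Fintype.card W * q = ∑ w, ∫⁻ ω, (A w).indicator 1 ω ∂ℙ := by
          simp only [lintegral_indicator_one (hA _), hq, Finset.sum_const, Finset.card_univ,
            nsmul_eq_mul]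
      _ = ∫⁻ ω, ∑ w, (A w).indicator 1 ω ∂ℙ :=
          (lintegral_finsetSum _ fun w _ ↦ measurable_one.indicator (hA w)).symm
      _ ≤ ∫⁻ _, ENNReal.ofReal (c * Fintype.card W) ∂ℙ := lintegral_mono hpoint
      _ = _ := by
          rw [lintegral_const, measure_univ, mul_one, mul_comm, ENNReal.ofReal_mul (by positivity),
            ENNReal.ofReal_natCast]
  exact (ENNReal.mul_le_mul_iff_right (by simp) (ENNReal.natCast_ne_top _)).1 hsum

variable {ι κ : Type*} [Fintype ι] [DecidableEq ι] [Fintype κ] [DecidableEq κ]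
  {τ L M ε z G : ℝ} {m : ℕ} {J : Matrix ι κ ℂ}

open Classical in
lemma card_hasResolventLE_not_nearlyLE_le (hτ : 0 ≤ τ) (hL : 0 < L) (hε : 0 < ε)
    (hM : 4 * L ^ 2 ≤ ε ^ 3 * M) (hG : τ * (G + m * (τ * M)) ≤ 1 - ε) (hJ : Jᴴ * J = 1)
    {V : (Fin m → ι → ZMod 3) → Matrix ι ι ℂ} (hV : ∀ σ, V σ ∈ unitary (Matrix ι ι ℂ))
    (hVJ : ∀ σ i, star (phaseVec (σ i)) ᵥ* (star (V σ) * J) = 0) (X : Matrix ι ι ℂ) :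
    (Finset.card {σ | HasResolventLE (V σ * X * star (V σ)) z L G ∧
      ¬NearlyLE (Jᴴ * (V σ * X * star (V σ)) * J) (z - (1 - ε) * m * shift τ L)
        ((G + m * (τ * M)) / L ^ 2)} : ℝ) ≤
      Real.exp (-(ε * m / 2)) * Fintype.card (Fin m → ι → ZMod 3) := by
  by_cases hX : HasResolventLE X z L G
  · obtain ⟨B, hBX, hB, hBL, hBG⟩ := hX
    have hcard := card_not_exists_isBarrier_le κ hτ hL hε hM m hB hBL
      ((mul_le_mul_of_nonneg_left (by gcongr) hτ).trans hG)
    refine (Nat.cast_le.2 (Finset.card_le_card fun σ hσ ↦ ?_)).trans hcard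
    simp only [Finset.mem_filter_univ] at hσ ⊢
    rintro ⟨T, hT, hT_tr, hbar⟩
    refine hσ.2 ?_
    have hA : (star (V σ) * J)ᴴ * (star (V σ) * J) = 1 := by
      rw [conjTranspose_mul, star_eq_conjTranspose, conjTranspose_conjTranspose, Matrix.mul_assoc,
        ← Matrix.mul_assoc (V σ), ← star_eq_conjTranspose, Unitary.mul_star_self_of_mem (hV σ),
        Matrix.one_mul, hJ]
    have := (hbar.nearlyLE hBX hT hA (hVJ σ)).mono le_rfl
      ((le_div_iff₀' (by positivity)).2 (hT_tr.trans (by gcongr : _ ≤ G + m * (τ * M))))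
    simpa only [star_eq_conjTranspose, conjTranspose_mul, conjTranspose_conjTranspose,
      Matrix.mul_assoc] using this
  · rw [Finset.filter_eq_empty_iff.2 fun σ _ hσ ↦ hX (hσ.1.of_conj (hV σ)), Finset.card_empty,
      Nat.cast_zero]
    positivity

theorem measure_hasResolventLE_not_nearlyLE_le {Ω : Type*} [MeasurableSpace Ω] (ℙ : Measure Ω)
    [IsProbabilityMeasure ℙ] {X : Ω → Matrix ι ι ℂ} (hX : Measurable X)
    (hinv : ∀ U ∈ unitary (Matrix ι ι ℂ), ℙ.map (fun ω ↦ U * X ω * star U) = ℙ.map X)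
    (hτ : 0 ≤ τ) (hL : 0 < L) (hε : 0 < ε) (hM : 4 * L ^ 2 ≤ ε ^ 3 * M)
    (hG : τ * (G + m * (τ * M)) ≤ 1 - ε) (hm : m + Fintype.card κ ≤ Fintype.card ι)
    (hJ : Jᴴ * J = 1) :
    ℙ {ω | HasResolventLE (X ω) z L G ∧
      ¬NearlyLE (Jᴴ * X ω * J) (z - (1 - ε) * m * shift τ L) ((G + m * (τ * M)) / L ^ 2)} ≤
      ENNReal.ofReal (Real.exp (-(ε * m / 2))) := by
  classical
  choose V hV hVJ using fun σ : Fin m → ι → ZMod 3 ↦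
    exists_unitary_vecMul_eq_zero hm hJ fun i ↦ phaseVec (σ i)
  set D := {A : Matrix ι ι ℂ | HasResolventLE A z L G ∧
    ¬NearlyLE (Jᴴ * A * J) (z - (1 - ε) * m * shift τ L) ((G + m * (τ * M)) / L ^ 2)}
  have hD : MeasurableSet D := by
    have : Continuous fun A : Matrix ι ι ℂ ↦ Jᴴ * A * J := by fun_prop
    exact (measurableSet_hasResolventLE z L G).inter
      (this.measurable (measurableSet_nearlyLE _ _)).compl
  have hrot : ∀ σ, Measurable fun ω ↦ V σ * X ω * star (V σ) := fun σ ↦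
    have : Continuous fun A : Matrix ι ι ℂ ↦ V σ * A * star (V σ) := by fun_prop
    this.measurable.comp hX
  have hcard := card_hasResolventLE_not_nearlyLE_le (z := z) hτ hL hε hM hG hJ hV hVJ
  refine measure_le_of_card_le ℙ (A := fun σ ↦ {ω | V σ * X ω * star (V σ) ∈ D})
    (fun σ ↦ hrot σ hD) (fun σ ↦ ?_) fun ω ↦ hcard (X ω)
  have := congrArg (· D) (hinv (V σ) (hV σ))
  rwa [Measure.map_apply (hrot σ) hD, Measure.map_apply hX hD] at this

end UnitaryInvariance

section Separable

/-- The matrix of the map `y ↦ x ⊗ y` from `ℂ^κ` to `ℂ^ι ⊗ ℂ^κ`. -/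
def tensorLeft {ι : Type*} (κ : Type*) [DecidableEq κ] (x : EuclideanSpace ℂ ι) :
    Matrix (ι × κ) κ ℂ :=
  of fun p k ↦ x p.1 * (1 : Matrix κ κ ℂ) p.2 k

variable {ι κ : Type*} [DecidableEq κ]

lemma tensorLeft_add (x y : EuclideanSpace ℂ ι) :
    tensorLeft κ (x + y) = tensorLeft κ x + tensorLeft κ y := by
  ext
  simp [tensorLeft, add_mul]

lemma tensorLeft_smul (r : ℝ) (x : EuclideanSpace ℂ ι) :
    tensorLeft κ (r • x) = r • tensorLeft κ x := by
  ext
  simp [tensorLeft, mul_assoc]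

variable [Fintype κ]

/-- The compression `⟨x, Y x⟩` of `Y` to the copy `x ⊗ ℂ^κ` of `ℂ^κ`. -/
def slice [Fintype ι] (x : EuclideanSpace ℂ ι) (Y : Matrix (ι × κ) (ι × κ) ℂ) : Matrix κ κ ℂ :=
  (tensorLeft κ x)ᴴ * Y * tensorLeft κ x

lemma vecMulVec_kronecker (x : EuclideanSpace ℂ ι) (B : Matrix κ κ ℂ) :
    vecMulVec x (star x) ⊗ₖ B = tensorLeft κ x * B * (tensorLeft κ x)ᴴ := by
  ext p q
  simp [tensorLeft, mul_apply, vecMulVec_apply, one_apply, apply_ite, mul_right_comm]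

variable [Fintype ι]

lemma conjTranspose_tensorLeft_mul_self (x : EuclideanSpace ℂ ι) :
    (tensorLeft κ x)ᴴ * tensorLeft κ x = (‖x‖ ^ 2) • 1 := by
  ext k l
  rcases eq_or_ne k l with rfl | h
  · simp [tensorLeft, mul_apply, Fintype.sum_prod_type, one_apply, EuclideanSpace.norm_sq_eq,
      apply_ite, Complex.conj_mul']
  · simp [tensorLeft, mul_apply, Fintype.sum_prod_type, one_apply, apply_ite, h, h.symm]

lemma slice_add (x : EuclideanSpace ℂ ι) (Y Z : Matrix (ι × κ) (ι × κ) ℂ) :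
    slice x (Y + Z) = slice x Y + slice x Z := by
  rw [slice, Matrix.mul_add, Matrix.add_mul, slice, slice]

lemma slice_sub (x : EuclideanSpace ℂ ι) (Y Z : Matrix (ι × κ) (ι × κ) ℂ) :
    slice x (Y - Z) = slice x Y - slice x Z := by
  rw [slice, Matrix.mul_sub, Matrix.sub_mul, slice, slice]

lemma slice_smul_one [DecidableEq ι] (x : EuclideanSpace ℂ ι) (r : ℝ) :
    slice x (r • (1 : Matrix (ι × κ) (ι × κ) ℂ)) = (r * ‖x‖ ^ 2) • 1 := by
  rw [slice, Matrix.mul_smul, Matrix.mul_one, Matrix.smul_mul, conjTranspose_tensorLeft_mul_self,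
    smul_smul]

lemma slice_one_kronecker [DecidableEq ι] (x : EuclideanSpace ℂ ι) (T : Matrix κ κ ℂ) :
    slice x ((1 : Matrix ι ι ℂ) ⊗ₖ T) = (‖x‖ ^ 2) • T := by
  have hcomm : (1 : Matrix ι ι ℂ) ⊗ₖ T * tensorLeft κ x = tensorLeft κ x * T := by
    ext p k
    simp [tensorLeft, mul_apply, Fintype.sum_prod_type, one_apply, mul_comm]
  rw [slice, Matrix.mul_assoc, hcomm, ← Matrix.mul_assoc, conjTranspose_tensorLeft_mul_self,
    Matrix.smul_mul, Matrix.one_mul]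

lemma slice_le_of_norm_sub_le [DecidableEq ι] {X : Matrix (ι × κ) (ι × κ) ℂ}
    (hX : 0 ≤ X) {b ε : ℝ} (hXb : X ≤ b • 1) (hb : 0 ≤ b) (hε : 0 < ε) (hε1 : ε ≤ 1)
    {x y : EuclideanSpace ℂ ι} (hx : ‖x‖ = 1) (hxy : ‖y - x‖ ≤ ε) :
    slice y X ≤ slice x X + (3 * ε * b) • 1 := by
  have hbound : ∀ v, slice v X ≤ (b * ‖v‖ ^ 2) • 1 := fun v ↦
    (conjTranspose_mul_mul_mono hXb (tensorLeft κ v)).trans_eq (slice_smul_one v b)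
  have hsplit : slice y X ≤ (1 + ε) • slice x X + (1 + ε⁻¹) • slice (y - x) X := by
    have := conjTranspose_add_mul_add_le hX hε (tensorLeft κ x) (tensorLeft κ (y - x))
    rwa [← tensorLeft_add, add_sub_cancel] at this
  rw [add_smul, one_smul, add_assoc] at hsplit
  refine hsplit.trans (add_le_add_right ?_ _)
  have hscalar : ε * (b * ‖x‖ ^ 2) + (1 + ε⁻¹) * (b * ‖y - x‖ ^ 2) ≤ 3 * ε * b := by
    calc _ ≤ ε * (b * 1 ^ 2) + (1 + ε⁻¹) * (b * ε ^ 2) := by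
          rw [hx]
          gcongr
      _ = (2 * ε + ε * ε) * b := by field_simp; ring
      _ ≤ (2 * ε + ε * 1) * b := by gcongr
      _ = 3 * ε * b := by ring
  calc ε • slice x X + (1 + ε⁻¹) • slice (y - x) X
      ≤ ε • (b * ‖x‖ ^ 2) • 1 + (1 + ε⁻¹) • (b * ‖y - x‖ ^ 2) • 1 := by
        gcongr <;> exact hbound _
    _ = (ε * (b * ‖x‖ ^ 2) + (1 + ε⁻¹) * (b * ‖y - x‖ ^ 2)) • 1 := by
        rw [smul_smul, smul_smul, ← add_smul]
    _ ≤ (3 * ε * b) • 1 := smul_le_smul_of_nonneg_right hscalar zero_le_one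

lemma slice_nonneg_of_unit {Y : Matrix (ι × κ) (ι × κ) ℂ} (hY : ∀ x, ‖x‖ = 1 → 0 ≤ slice x Y)
    (x : EuclideanSpace ℂ ι) : 0 ≤ slice x Y := by
  rcases eq_or_ne x 0 with rfl | hx
  · have hzero : tensorLeft κ (0 : EuclideanSpace ℂ ι) = 0 := by
      simpa using tensorLeft_smul (κ := κ) 0 (0 : EuclideanSpace ℂ ι)
    rw [slice, hzero, Matrix.mul_zero]
  · have hx' : ‖x‖ ≠ 0 := norm_ne_zero_iff.2 hx
    have hunit : ‖‖x‖⁻¹ • x‖ = 1 := by rw [norm_smul, norm_inv, norm_norm, inv_mul_cancel₀ hx']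
    rw [← smul_inv_smul₀ hx' x, slice, tensorLeft_smul, conjTranspose_smul, star_trivial,
      Matrix.smul_mul, Matrix.smul_mul, Matrix.mul_smul]
    exact smul_nonneg (norm_nonneg x) (smul_nonneg (norm_nonneg x) (hY _ hunit))

variable {n d : ℕ}

lemma nonneg_of_mem_SEP {X : Matrix (Fin n × Fin d) (Fin n × Fin d) ℂ} (hX : X ∈ SEP n d) :
    0 ≤ X := by
  obtain ⟨k, A, B, hA, hB, rfl⟩ := hX
  exact Finset.sum_nonneg fun i _ ↦ ((hA i).kronecker (hB i)).nonneg

lemma exists_eq_sum_tensorLeft_of_mem_SEP {X : Matrix (Fin n × Fin d) (Fin n × Fin d) ℂ}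
    (hX : X ∈ SEP n d) :
    ∃ (s : Type) (_ : Fintype s) (x : s → EuclideanSpace ℂ (Fin n))
      (B : s → Matrix (Fin d) (Fin d) ℂ), (∀ i, 0 ≤ B i) ∧
      X = ∑ i, tensorLeft (Fin d) (x i) * B i * (tensorLeft (Fin d) (x i))ᴴ := by
  obtain ⟨k, A, B, hA, hB, rfl⟩ := hX
  choose m v hv using fun i ↦ posSemidef_iff_eq_sum_vecMulVec.1 (hA i)
  refine ⟨Σ i, Fin (m i), inferInstance, fun p ↦ WithLp.toLp 2 (v p.1 p.2), fun p ↦ B p.1,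
    fun p ↦ (hB p.1).nonneg, ?_⟩
  rw [Fintype.sum_sigma]
  refine Finset.sum_congr rfl fun i _ ↦ ?_
  simp only [← vecMulVec_kronecker]
  rw [hv i]
  ext
  simp [Matrix.sum_apply, Finset.sum_mul]

lemma trace_mul_re_nonneg_of_mem_SEP {X Y : Matrix (Fin n × Fin d) (Fin n × Fin d) ℂ}
    (hX : X ∈ SEP n d) (hY : ∀ x, ‖x‖ = 1 → 0 ≤ slice x Y) :
    0 ≤ (X * Y).trace.re := by
  obtain ⟨s, _, x, B, hB, rfl⟩ := exists_eq_sum_tensorLeft_of_mem_SEP hX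
  rw [Finset.sum_mul, trace_sum, Complex.re_sum]
  refine Finset.sum_nonneg fun i _ ↦ ?_
  rw [Matrix.mul_assoc, Matrix.mul_assoc, trace_mul_comm, Matrix.mul_assoc, trace_mul_comm]
  have := trace_mul_re_nonneg (slice_nonneg_of_unit hY (x i)) (hB i)
  simpa only [slice, Matrix.mul_assoc] using this

lemma trace_mul_self_re_le_of_slice_le {X : Matrix (Fin n × Fin d) (Fin n × Fin d) ℂ}
    (hX : X ∈ SEP n d) {b K : ℝ} (hXb : X ≤ b • 1) {S : Matrix (Fin d) (Fin d) ℂ} (hS : 0 ≤ S)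
    (hslice : ∀ x, ‖x‖ = 1 → slice x X ≤ K • 1 + S) :
    (X * X).trace.re ≤ K * X.trace.re + b * (n * S.trace.re) := by
  set W : Matrix (Fin n × Fin d) (Fin n × Fin d) ℂ := (1 : Matrix (Fin n) (Fin n) ℂ) ⊗ₖ S with hW
  have hdual : 0 ≤ (X * (K • 1 + W - X)).trace.re := by
    refine trace_mul_re_nonneg_of_mem_SEP hX fun x hx ↦ ?_
    rw [slice_sub, slice_add, slice_smul_one, slice_one_kronecker, hx, one_pow, mul_one, one_smul,
      sub_nonneg]
    exact hslice x hx
  have hWX : 0 ≤ (W * (b • 1 - X)).trace.re :=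
    trace_mul_re_nonneg (PosSemidef.one.kronecker hS.posSemidef).nonneg (sub_nonneg.2 hXb)
  have hWtr : W.trace.re = n * S.trace.re := by simp [hW, trace_kronecker]
  rw [Matrix.mul_sub, trace_sub, Matrix.mul_smul, Matrix.mul_one, trace_smul, Complex.sub_re,
    Complex.smul_re, smul_eq_mul, hWtr] at hWX
  rw [Matrix.mul_sub, Matrix.mul_add, trace_sub, trace_add, Matrix.mul_smul, Matrix.mul_one,
    trace_smul, Complex.sub_re, Complex.add_re, Complex.smul_re, smul_eq_mul,
    trace_mul_comm X W] at hdual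
  linarith

lemma trace_mul_self_re_le_of_nearlyLE {X : Matrix (Fin n × Fin d) (Fin n × Fin d) ℂ}
    (hX : X ∈ SEP n d) {b : ℝ} (hb : 0 ≤ b) (hXb : X ≤ b • 1) {ε K R : ℝ} (hε : 0 < ε)
    (hε1 : ε ≤ 1) {net : Finset (EuclideanSpace ℂ (Fin n))} (hunit : ∀ x ∈ net, ‖x‖ = 1)
    (hnet : Metric.sphere 0 1 ⊆ ⋃ x ∈ net, Metric.ball x ε)
    (hgood : ∀ x ∈ net, NearlyLE (slice x X) K R) :
    (X * X).trace.re ≤ (K + 3 * ε * b) * X.trace.re + b * (n * (net.card * R)) := by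
  choose! T hT hT0 hTtr using hgood
  have hslice : ∀ y, ‖y‖ = 1 → slice y X ≤ (K + 3 * ε * b) • 1 + ∑ x ∈ net, T x := by
    intro y hy
    obtain ⟨x, hx, hyx⟩ : ∃ x ∈ net, y ∈ Metric.ball x ε := by
      simpa using hnet (mem_sphere_zero_iff_norm.2 hy)
    calc slice y X ≤ slice x X + (3 * ε * b) • 1 := slice_le_of_norm_sub_le
          (nonneg_of_mem_SEP hX) hXb hb hε hε1 (hunit x hx) (mem_ball_iff_norm.1 hyx).le
      _ ≤ (K • 1 + T x) + (3 * ε * b) • 1 := by gcongr; exact hT x hx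
      _ ≤ (K • 1 + ∑ x ∈ net, T x) + (3 * ε * b) • 1 := by
        gcongr
        exact Finset.single_le_sum hT0 hx
      _ = (K + 3 * ε * b) • 1 + ∑ x ∈ net, T x := by rw [add_smul]; abel
  refine (trace_mul_self_re_le_of_slice_le hX hXb (Finset.sum_nonneg hT0) hslice).trans ?_
  gcongr
  rw [trace_sum, Complex.re_sum, ← nsmul_eq_mul]
  exact Finset.sum_le_card_nsmul _ _ _ hTtr

end Separable

section Asymptotics

lemma exists_pos_lt_half_sub_mul_lt {z r K : ℝ} (hK : z - r < K) :
    ∃ ε > 0, ε < 1 / 2 ∧ z - (1 - ε) * ((1 - 2 * ε) * r) < K := by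
  have hlim : Tendsto (fun ε : ℝ ↦ z - (1 - ε) * ((1 - 2 * ε) * r)) (𝓝[>] 0)
      (𝓝 (z - (1 - 0) * ((1 - 2 * 0) * r))) :=
    (Continuous.tendsto (by fun_prop) 0).mono_left nhdsWithin_le_nhds
  rw [sub_zero, mul_zero, sub_zero, one_mul, one_mul] at hlim
  obtain ⟨ε, hεK, hε, hε2⟩ :=
    ((hlim.eventually_lt_const hK).and (Ioo_mem_nhdsGT (by norm_num : (0 : ℝ) < 1 / 2))).exists
  exact ⟨ε, hε, hε2, hεK⟩

lemma exists_eventually_shift_parameters {α g L z K : ℝ} (hg : 0 < g) (hK : z - α / g < K) :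
    ∃ ε > 0, ∃ M, 4 * L ^ 2 ≤ ε ^ 3 * M ∧ ∀ᶠ N : ℝ in atTop, ∃ τ ≥ 0,
      τ * (g * N + α * N * (τ * M)) ≤ 1 - ε ∧ z - (1 - ε) * (α * N) * shift τ L ≤ K ∧
      g * N + α * N * (τ * M) ≤ (g + 1) * N := by
  obtain ⟨ε, hε, hε2, hεK⟩ := exists_pos_lt_half_sub_mul_lt hK
  obtain ⟨M, hM⟩ : ∃ M, 4 * L ^ 2 = ε ^ 3 * M := ⟨4 * L ^ 2 / ε ^ 3, by field_simp⟩
  refine ⟨ε, hε, M, hM.le, ?_⟩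
  obtain ⟨τ, hτ⟩ : ∃ τ : ℝ → ℝ, ∀ N, τ N = (1 - 2 * ε) / (g * N) := ⟨_, fun _ ↦ rfl⟩
  have hτ_lim : Tendsto τ atTop (𝓝 0) := by
    rw [funext hτ]
    exact tendsto_const_nhds.div_atTop (tendsto_id.const_mul_atTop hg)
  have hmass : ∀ᶠ N in atTop, τ N * (g * N) = 1 - 2 * ε := by
    filter_upwards [eventually_gt_atTop 0] with N hN
    rw [hτ, div_mul_cancel₀ _ (by positivity)]
  have hmass' : ∀ᶠ N in atTop, α * N * τ N = (1 - 2 * ε) * (α / g) := by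
    filter_upwards [hmass] with N hN
    rw [← hN]
    field_simp
  have htrace : Tendsto (fun N ↦ 1 - 2 * ε + τ N * ((1 - 2 * ε) * (α / g) * M)) atTop
      (𝓝 (1 - 2 * ε + 0 * ((1 - 2 * ε) * (α / g) * M))) := (hτ_lim.mul_const _).const_add _
  have hshift : Tendsto (fun N ↦ z - (1 - ε) * ((1 - 2 * ε) * (α / g) / (1 + τ N * L))) atTop
      (𝓝 (z - (1 - ε) * ((1 - 2 * ε) * (α / g) / (1 + 0 * L)))) :=
    ((tendsto_const_nhds.div ((hτ_lim.mul_const L).const_add 1) (by simp)).const_mul _).const_sub _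
  rw [zero_mul, add_zero] at htrace hshift
  rw [div_one] at hshift
  filter_upwards [hmass, hmass', htrace.eventually_le_const (by linarith : 1 - 2 * ε < 1 - ε),
    hshift.eventually_le_const hεK, eventually_ge_atTop ((1 - 2 * ε) * (α / g) * M),
    eventually_gt_atTop 0] with N h₁ h₂ h₃ h₄ h₅ hN
  refine ⟨τ N, hτ N ▸ div_nonneg (by linarith) (by positivity), ?_, ?_, ?_⟩
  · rwa [mul_add, h₁, ← mul_assoc _ _ M, h₂]
  · rwa [mul_assoc, shift, ← mul_div_assoc, h₂]
  · rw [← mul_assoc _ _ M, h₂]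
    linarith

variable {Ω : Type*} [MeasurableSpace Ω] {ℙ : Measure Ω} [IsProbabilityMeasure ℙ] {n : ℕ}
  {X : (d : ℕ) → Ω → Matrix (Fin n × Fin d) (Fin n × Fin d) ℂ}

namespace UnitInv

lemma exists_eventually_measure_not_nearlyLE_slice_le (hinv : UnitInv ℙ n X)
    (hX : ∀ d, Measurable (X d)) (hn : 2 ≤ n) {g L z K : ℝ} (hg : 0 < g) (hL : 0 < L)
    (hK : z - (1 - (n : ℝ)⁻¹) / g < K) {x : EuclideanSpace ℂ (Fin n)} (hx : ‖x‖ = 1) :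
    ∃ r > 0, ∀ᶠ d : ℕ in atTop, ℙ {ω | HasResolventLE (X d ω) z L (g * (n * d)) ∧
      ¬NearlyLE (slice x (X d ω)) K ((g + 1) * (n * d) / L ^ 2)} ≤
      ENNReal.ofReal (Real.exp (-r) ^ d) := by
  obtain ⟨ε, hε, M, hM, hparam⟩ := exists_eventually_shift_parameters (L := L) hg hK
  have hN : Tendsto (fun d : ℕ ↦ (n * d : ℝ)) atTop atTop :=
    tendsto_natCast_atTop_atTop.const_mul_atTop (by positivity)
  refine ⟨ε / 2, by positivity, ?_⟩
  filter_upwards [hN.eventually hparam] with d ⟨τ, hτ, hG, hKτ, hR⟩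
  have hm : (1 - (n : ℝ)⁻¹) * (n * d) = ((n - 1) * d : ℕ) := by
    rw [Nat.cast_mul, Nat.cast_pred (by omega)]
    field_simp
  rw [hm] at hG hKτ hR
  have hcard : (n - 1) * d + Fintype.card (Fin d) ≤ Fintype.card (Fin n × Fin d) := by
    rw [Fintype.card_prod, Fintype.card_fin, Fintype.card_fin, ← Nat.succ_mul,
      Nat.succ_eq_add_one, Nat.sub_add_cancel (by omega)]
  have hJ : (tensorLeft (Fin d) x)ᴴ * tensorLeft (Fin d) x = 1 := by
    rw [conjTranspose_tensorLeft_mul_self, hx, one_pow, one_smul]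
  have hmeas := measure_hasResolventLE_not_nearlyLE_le ℙ (hX d) (hinv d) (z := z) hτ hL hε hM hG
    hcard hJ
  refine le_trans (measure_mono ?_) (hmeas.trans (ENNReal.ofReal_le_ofReal ?_))
  · exact fun ω hω ↦ ⟨hω.1, fun h ↦ hω.2 (h.mono hKτ (by gcongr))⟩
  rw [← Real.exp_nat_mul]
  refine Real.exp_le_exp.2 ?_
  have hd : (d : ℝ) ≤ ((n - 1) * d : ℕ) := by exact_mod_cast Nat.le_mul_of_pos_left d (by omega)
  linarith [mul_le_mul_of_nonneg_left hd hε.le]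

lemma ae_eventually_nearlyLE_slice (hinv : UnitInv ℙ n X) (hX : ∀ d, Measurable (X d))
    (hn : 2 ≤ n) {g L z K : ℝ} (hg : 0 < g) (hL : 0 < L) (hK : z - (1 - (n : ℝ)⁻¹) / g < K)
    {x : EuclideanSpace ℂ (Fin n)} (hx : ‖x‖ = 1) :
    ∀ᵐ ω ∂ℙ, ∀ᶠ d : ℕ in atTop, HasResolventLE (X d ω) z L (g * (n * d)) →
      NearlyLE (slice x (X d ω)) K ((g + 1) * (n * d) / L ^ 2) := by
  obtain ⟨r, hr, hbound⟩ :=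
    hinv.exists_eventually_measure_not_nearlyLE_slice_le hX hn hg hL hK hx
  obtain ⟨d₀, hd₀⟩ := eventually_atTop.1 hbound
  have hsum : Summable fun d ↦ Real.exp (-r) ^ (d + d₀) := (summable_nat_add_iff d₀).2
    (summable_geometric_of_lt_one (Real.exp_pos _).le (Real.exp_lt_one_iff.2 (by linarith)))
  have hfin := ne_top_of_le_ne_top hsum.tsum_ofReal_ne_top
    (ENNReal.tsum_le_tsum fun d ↦ hd₀ (d + d₀) (Nat.le_add_left _ _))
  filter_upwards [ae_eventually_notMem hfin] with ω hω
  rw [← map_add_atTop_eq_nat d₀, eventually_map]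
  filter_upwards [hω] with d hd hres
  exact by_contra fun h ↦ hd ⟨hres, h⟩

end UnitInv

end Asymptotics

section SpectralInput

variable {ι : Type*} [Fintype ι] [DecidableEq ι] {A : Matrix ι ι ℂ}

lemma polyApply_eq_cfc (hA : A.IsHermitian) (P : ℝ[X]) : polyApply P A = cfc P.eval A :=
  (aeval_map_algebraMap ℂ A P).trans (cfc_polynomial P A hA).symm

open scoped Matrix.Norms.L2Operator in
lemma le_opNorm_smul_one (hA : A.IsHermitian) : A ≤ opNorm A • 1 := by
  rw [← Algebra.algebraMap_eq_smul_one]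
  exact IsSelfAdjoint.le_algebraMap_norm_self (a := A) hA

lemma HasResolventLE.of_le {b z L G : ℝ} (hA : 0 ≤ A) (hAb : A ≤ b • 1) (hbz : b < z)
    (hL : (z - b)⁻¹ ≤ L) {P : ℝ[X]} (hP : ∀ x ∈ Set.Icc 0 b, (z - x)⁻¹ ≤ P.eval x)
    (hG : (polyApply P A).trace.re ≤ G) : HasResolventLE A z L G := by
  have hA' : A.IsHermitian := hA.isSelfAdjoint
  have hspec : ∀ x ∈ spectrum ℝ A, x ∈ Set.Icc 0 b := fun x hx ↦
    ⟨spectrum_nonneg_of_nonneg hA hx, (le_algebraMap_iff_spectrum_le hA').1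
      (by rwa [Algebra.algebraMap_eq_smul_one]) x hx⟩
  have hpos : ∀ x ∈ spectrum ℝ A, 0 < z - x := fun x hx ↦ by linarith [(hspec x hx).2]
  refine ⟨cfc (fun x ↦ (z - x)⁻¹) A, ?_, cfc_nonneg fun x hx ↦ (inv_pos.2 (hpos x hx)).le, ?_, ?_⟩
  · have hsub : z • 1 - A = cfc (fun x ↦ z - x) A := by
      rw [cfc_sub _ _ A (continuousOn_spectrum A _), cfc_const z A, cfc_id' ℝ A,
        Algebra.algebraMap_eq_smul_one]
    rw [hsub, ← cfc_mul _ _ A (continuousOn_spectrum A _) (continuousOn_spectrum A _),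
      cfc_congr fun x hx ↦ inv_mul_cancel₀ (hpos x hx).ne', cfc_const_one ℝ A]
  · rw [← Algebra.algebraMap_eq_smul_one, cfc_le_algebraMap_iff _ _ A (continuousOn_spectrum A _)]
    exact fun x hx ↦ (inv_anti₀ (sub_pos.2 hbz) (by linarith [(hspec x hx).2])).trans hL
  · refine (trace_re_mono ?_).trans hG
    rw [polyApply_eq_cfc hA']
    exact cfc_mono (fun x hx ↦ hP x (hspec x hx)) (continuousOn_spectrum A _)
      (continuousOn_spectrum A _)

variable {μ : Measure ℝ}

lemma msupport_subset_of_ae_mem {S : Set ℝ} (hS : IsClosed S) (hμ : ∀ᵐ x ∂μ, x ∈ S) :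
    msupport μ ⊆ S := fun _ hx ↦ by_contra fun h ↦ (hx Sᶜ hS.isOpen_compl h).ne' hμ

lemma integrable_of_continuousOn_of_ae_mem [IsFiniteMeasure μ] {a b : ℝ} {f : ℝ → ℝ}
    (hf : ContinuousOn f (Set.Icc a b)) (hμ : ∀ᵐ x ∂μ, x ∈ Set.Icc a b) : Integrable f μ := by
  rw [← Measure.restrict_eq_self_of_ae_mem hμ]
  exact hf.integrableOn_Icc

lemma exists_polynomial_ge_of_continuousOn [IsProbabilityMeasure μ] {a b : ℝ} {f : ℝ → ℝ}
    (hf : ContinuousOn f (Set.Icc a b)) (hμ : ∀ᵐ x ∂μ, x ∈ Set.Icc a b) {ε : ℝ} (hε : 0 < ε) :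
    ∃ P : ℝ[X], (∀ x ∈ Set.Icc a b, f x ≤ P.eval x) ∧
      ∫ x, P.eval x ∂μ ≤ ∫ x, f x ∂μ + ε := by
  obtain ⟨P, hP⟩ := exists_polynomial_near_of_continuousOn a b (fun x ↦ f x + ε / 2)
    (hf.add continuousOn_const) (ε / 2) (by positivity)
  refine ⟨P, fun x hx ↦ by linarith [(abs_lt.1 (hP x hx)).1], ?_⟩
  have hfi := integrable_of_continuousOn_of_ae_mem hf hμ
  calc ∫ x, P.eval x ∂μ ≤ ∫ x, (f x + ε) ∂μ := by
        refine integral_mono_ae (integrable_of_continuousOn_of_ae_mem P.continuousOn hμ)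
          (hfi.add (integrable_const ε)) ?_
        filter_upwards [hμ] with x hx
        linarith [(abs_lt.1 (hP x hx)).2]
    _ = ∫ x, f x ∂μ + ε := by rw [integral_add hfi (integrable_const ε)]; simp

lemma continuousOn_inv_sub {a b z : ℝ} (hbz : b < z) :
    ContinuousOn (fun x ↦ (z - x)⁻¹) (Set.Icc a b) :=
  ContinuousOn.inv₀ (by fun_prop) fun x hx ↦ by linarith [hx.2]

lemma integral_inv_sub_pos [IsProbabilityMeasure μ] {b z : ℝ} (hμ : ∀ᵐ x ∂μ, x ∈ Set.Icc 0 b)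
    (hbz : b < z) : 0 < ∫ x, (z - x)⁻¹ ∂μ := by
  obtain ⟨x₀, hx₀⟩ := hμ.exists
  have hz : 0 < z := by linarith [hx₀.1, hx₀.2]
  calc 0 < z⁻¹ := inv_pos.2 hz
    _ = ∫ _, z⁻¹ ∂μ := by simp
    _ ≤ ∫ x, (z - x)⁻¹ ∂μ := by
      refine integral_mono_ae (integrable_const _)
        (integrable_of_continuousOn_of_ae_mem (continuousOn_inv_sub hbz) hμ) ?_
      filter_upwards [hμ] with x hx
      exact inv_anti₀ (by linarith [hx.2]) (by linarith [hx.1])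

namespace StrongConv

variable {Ω : Type*} [MeasurableSpace Ω] {ℙ : Measure Ω} {n : ℕ}
  {X : (d : ℕ) → Ω → Matrix (Fin n × Fin d) (Fin n × Fin d) ℂ}

lemma ae_tendsto_trace_re (h : StrongConv ℙ n X μ) : ∀ᵐ ω ∂ℙ, ∀ P : ℝ[X],
    Tendsto (fun d : ℕ ↦ (polyApply P (X d ω)).trace.re / (n * d)) atTop
      (𝓝 (∫ x, P.eval x ∂μ)) := by
  filter_upwards [h] with ω hω P
  refine ((Complex.continuous_re.tendsto _).comp (hω P).1).congr fun d ↦ ?_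
  rw [Function.comp_apply, ← Nat.cast_mul, ← Complex.ofReal_natCast, ← Complex.ofReal_inv,
    Complex.re_ofReal_mul, inv_mul_eq_div, Nat.cast_mul]

lemma ae_eventually_opNorm_lt (h : StrongConv ℙ n X μ) {b b' : ℝ}
    (hμ : ∀ᵐ x ∂μ, x ∈ Set.Icc 0 b) (hb : 0 ≤ b) (hbb' : b < b') :
    ∀ᵐ ω ∂ℙ, ∀ᶠ d in atTop, opNorm (X d ω) < b' := by
  filter_upwards [h] with ω hω
  have hsup : sSup ((fun x ↦ |(Polynomial.X : ℝ[X]).eval x|) '' msupport μ) ≤ b := by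
    refine Real.sSup_le ?_ hb
    rintro _ ⟨x, hx, rfl⟩
    obtain ⟨hx0, hxb⟩ := msupport_subset_of_ae_mem isClosed_Icc hμ hx
    simpa only [eval_X, abs_of_nonneg hx0] using hxb
  simpa [polyApply] using (hω Polynomial.X).2.eventually_lt_const (hsup.trans_lt hbb')

lemma ae_eventually_hasResolventLE [IsProbabilityMeasure μ] (h : StrongConv ℙ n X μ)
    (hn : 0 < n) {b b' z g L : ℝ}
    (hμ : ∀ᵐ x ∂μ, x ∈ Set.Icc 0 b) (hb : 0 ≤ b) (hbb' : b < b') (hbz : b' < z)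
    (hg : ∫ x, (z - x)⁻¹ ∂μ < g) (hL : (z - b')⁻¹ ≤ L) :
    ∀ᵐ ω ∂ℙ, ∀ᶠ d in atTop, 0 ≤ X d ω → HasResolventLE (X d ω) z L (g * (n * d)) := by
  obtain ⟨P, hP, hPint⟩ := exists_polynomial_ge_of_continuousOn (continuousOn_inv_sub hbz)
    (hμ.mono fun x hx ↦ Set.Icc_subset_Icc_right hbb'.le hx) (half_pos (sub_pos.2 hg))
  filter_upwards [h.ae_tendsto_trace_re, h.ae_eventually_opNorm_lt hμ hb hbb'] with ω htr hnorm
  filter_upwards [(htr P).eventually_lt_const (by linarith : _ < g), hnorm, eventually_gt_atTop 0]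
    with d hd hdb hd0 hX
  have hXb : X d ω ≤ b' • 1 := (le_opNorm_smul_one hX.isSelfAdjoint).trans
    (smul_le_smul_of_nonneg_right hdb.le zero_le_one)
  rw [div_lt_iff₀ (by positivity)] at hd
  exact .of_le hX hXb hbz hL hP hd.le

end StrongConv

end SpectralInput

section Criterion

lemma exists_sphere_cover_balls (E : Type*) [NormedAddCommGroup E] [NormedSpace ℝ E]
    [FiniteDimensional ℝ E] {ε : ℝ} (hε : 0 < ε) :
    ∃ net : Finset E, (∀ x ∈ net, ‖x‖ = 1) ∧
      Metric.sphere 0 1 ⊆ ⋃ x ∈ net, Metric.ball x ε := by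
  have := FiniteDimensional.proper ℝ E
  obtain ⟨t, ht, hfin, hcover⟩ := (isCompact_sphere (0 : E) 1).finite_cover_balls hε
  refine ⟨hfin.toFinset, fun x hx ↦ mem_sphere_zero_iff_norm.1 (ht (hfin.mem_toFinset.1 hx)), ?_⟩
  simpa using hcover

lemma exists_slack {α G b z m₁ m₂ : ℝ} (hG : 0 < G) (hcrit : m₁ * (z - α / G) < m₂)
    (hbz : b < z) :
    ∃ t > 0, t ≤ 1 ∧ b + t < z ∧ m₁ * (z - α / (G + t) + t + 3 * t * (b + t)) < m₂ := by
  have hcont : ContinuousAt (fun t ↦ m₁ * (z - α / (G + t) + t + 3 * t * (b + t))) 0 := by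
    have : G + 0 ≠ 0 := by simpa using hG.ne'
    fun_prop (disch := assumption)
  have hlim := hcont.tendsto.mono_left (nhdsWithin_le_nhds (s := Set.Ioi 0))
  simp only [add_zero, mul_zero, zero_mul] at hlim
  obtain ⟨t, ht, ht0, ht1⟩ := ((hlim.eventually_lt_const hcrit).and
    (Ioo_mem_nhdsGT (lt_min one_pos (sub_pos.2 hbz)))).exists
  rw [lt_min_iff] at ht1
  exact ⟨t, ht0, ht1.1.le, by linarith, ht⟩

variable {Ω : Type*} [MeasurableSpace Ω] {ℙ : Measure Ω} {n : ℕ}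
  {X : (d : ℕ) → Ω → Matrix (Fin n × Fin d) (Fin n × Fin d) ℂ} {μ : Measure ℝ}

section

variable {ι : Type*} [Fintype ι] [DecidableEq ι] (A : Matrix ι ι ℂ)

lemma polyApply_X : polyApply Polynomial.X A = A := by simp [polyApply]

lemma polyApply_X_sq : polyApply (Polynomial.X ^ 2) A = A * A := by simp [polyApply, sq]

end

lemma StrongConv.ae_eventually_notMem_SEP_of_nearlyLE (h : StrongConv ℙ n X μ) (hn : 0 < n)
    {b : ℝ} (hb : 0 ≤ b) (hXb : ∀ᵐ ω ∂ℙ, ∀ᶠ d in atTop, opNorm (X d ω) < b)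
    {ε : ℝ} (hε : 0 < ε) (hε1 : ε ≤ 1) {net : Finset (EuclideanSpace ℂ (Fin n))}
    (hunit : ∀ x ∈ net, ‖x‖ = 1) (hnet : Metric.sphere 0 1 ⊆ ⋃ x ∈ net, Metric.ball x ε) {K R : ℝ}
    (hgood : ∀ᵐ ω ∂ℙ, ∀ᶠ d : ℕ in atTop, 0 ≤ X d ω →
      ∀ x ∈ net, NearlyLE (slice x (X d ω)) K (R * (n * d)))
    (hlt : (∫ x, x ∂μ) * (K + 3 * ε * b) + b * (n * (net.card * R)) < ∫ x, x ^ 2 ∂μ) :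
    ∀ᵐ ω ∂ℙ, ∀ᶠ d in atTop, X d ω ∉ SEP n d := by
  filter_upwards [h.ae_tendsto_trace_re, hXb, hgood] with ω htr hnorm hω
  have hmean := htr Polynomial.X
  simp only [polyApply_X, eval_X] at hmean
  have hsq := htr (Polynomial.X ^ 2)
  simp only [polyApply_X_sq, eval_pow, eval_X] at hsq
  have hlim := (hmean.mul_const (K + 3 * ε * b)).add_const (b * (n * (net.card * R)))
  filter_upwards [hlim.eventually_lt hsq hlt, hnorm, hω, eventually_gt_atTop 0]
    with d hd hdb hdgood hd0 hsep
  have hX := nonneg_of_mem_SEP hsep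
  have hXb : X d ω ≤ b • 1 := (le_opNorm_smul_one hX.isSelfAdjoint).trans
    (smul_le_smul_of_nonneg_right hdb.le zero_le_one)
  have hle := trace_mul_self_re_le_of_nearlyLE hsep hb hXb hε hε1 hunit hnet (hdgood hX)
  refine hd.not_ge ?_
  rw [div_le_iff₀ (by positivity)]
  refine hle.trans_eq ?_
  field_simp

theorem UnitInv.ae_eventually_notMem_SEP [IsProbabilityMeasure ℙ] [IsProbabilityMeasure μ]
    (hinv : UnitInv ℙ n X) (hX : ∀ d, Measurable (X d)) (hconv : StrongConv ℙ n X μ) (hn : 2 ≤ n)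
    {b z : ℝ} (hμ : ∀ᵐ x ∂μ, x ∈ Set.Icc 0 b) (hbz : b < z)
    (hcrit : (∫ x, x ∂μ) * (z - (1 - (n : ℝ)⁻¹) / ∫ x, (z - x)⁻¹ ∂μ) < ∫ x, x ^ 2 ∂μ) :
    ∀ᵐ ω ∂ℙ, ∀ᶠ d in atTop, X d ω ∉ SEP n d := by
  have hb : 0 ≤ b := hμ.exists.elim fun _ hx ↦ hx.1.trans hx.2
  have hG := integral_inv_sub_pos hμ hbz
  obtain ⟨t, ht, ht1, htz, hlt⟩ := exists_slack hG hcrit hbz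
  obtain ⟨net, hunit, hnet⟩ := exists_sphere_cover_balls (EuclideanSpace ℂ (Fin n)) ht
  set g := ∫ x, (z - x)⁻¹ ∂μ + t
  have hlim : Tendsto (fun L : ℝ ↦ (∫ x, x ∂μ) *
      (z - (1 - (n : ℝ)⁻¹) / g + t + 3 * t * (b + t)) +
        (b + t) * (n * (net.card * ((g + 1) / L ^ 2)))) atTop
      (𝓝 ((∫ x, x ∂μ) * (z - (1 - (n : ℝ)⁻¹) / g + t + 3 * t * (b + t)) +
        (b + t) * (n * (net.card * 0)))) :=
    ((((tendsto_pow_atTop two_ne_zero).const_div_atTop _).const_mul _).const_mul _).const_mul _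
      |>.const_add _
  simp only [mul_zero, add_zero] at hlim
  obtain ⟨L, hL, hLz, hL0⟩ := ((hlim.eventually_lt_const hlt).and
    ((eventually_ge_atTop (z - (b + t))⁻¹).and (eventually_gt_atTop 0))).exists
  refine hconv.ae_eventually_notMem_SEP_of_nearlyLE (by omega) (by positivity)
    (hconv.ae_eventually_opNorm_lt hμ hb (lt_add_of_pos_right b ht)) ht ht1 hunit hnet ?_ hL
  have hslice := (ae_ball_iff net.countable_toSet).2 fun x hx ↦
    hinv.ae_eventually_nearlyLE_slice (z := z) (K := z - (1 - (n : ℝ)⁻¹) / g + t) hX hn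
      (add_pos hG ht) hL0 (lt_add_of_pos_right _ ht) (hunit x hx)
  filter_upwards [hconv.ae_eventually_hasResolventLE (by omega) hμ hb
    (lt_add_of_pos_right b ht) htz (lt_add_of_pos_right _ ht) hLz, hslice] with ω hres hω
  filter_upwards [hres, (eventually_all_finset net).2 hω] with d hd hdx hX0 x hx
  rw [div_mul_eq_mul_div]
  exact hdx x hx (hd hX0)

lemma tendsto_measure_mem_SEP_of_ae_eventually_notMem [IsFiniteMeasure ℙ]
    (hX : ∀ d, Measurable (X d)) (h : ∀ᵐ ω ∂ℙ, ∀ᶠ d in atTop, X d ω ∉ SEP n d) :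
    Tendsto (fun d ↦ ℙ {ω | X d ω ∈ SEP n d}) atTop (𝓝 0) := by
  rw [← measure_empty (μ := ℙ)]
  refine tendsto_measure_of_ae_tendsto_indicator_of_isFiniteMeasure atTop MeasurableSet.empty
    (fun d ↦ hX d (measurableSet_SEP n d)) ?_
  filter_upwards [h] with ω hω
  filter_upwards [hω] with d hd
  simpa using hd

end Criterion

section PoissonIntegral

open Real

lemma sin_sq_le_one_sub_two_mul_cos_add_sq (r θ : ℝ) :
    sin θ ^ 2 ≤ 1 - 2 * r * cos θ + r ^ 2 := by
  nlinarith [sq_nonneg (r - cos θ), sin_sq_add_cos_sq θ]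

lemma intervalIntegral_two_pi_of_symm {f : ℝ → ℝ} (hf : Continuous f)
    (hsymm : ∀ θ, f (2 * π - θ) = f θ) :
    ∫ θ in (0 : ℝ)..2 * π, f θ = 2 * ∫ θ in (0 : ℝ)..π, f θ := by
  have hreflect := intervalIntegral.integral_comp_sub_left (a := 0) (b := π) f (2 * π)
  simp only [hsymm, sub_zero, show 2 * π - π = π by ring] at hreflect
  rw [← intervalIntegral.integral_add_adjacent_intervals (hf.intervalIntegrable 0 π)
    (hf.intervalIntegrable π (2 * π)), ← hreflect, ← two_mul]

lemma poissonKernel_circleMap (r θ : ℝ) :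
    poissonKernel 0 r (circleMap 0 1 θ) = (1 - r ^ 2) / (1 - 2 * r * cos θ + r ^ 2) := by
  have hnorm : ‖circleMap 0 1 θ - r‖ ^ 2 = 1 - 2 * r * cos θ + r ^ 2 := by
    rw [← Complex.normSq_eq_norm_sq, Complex.normSq_apply]
    simp only [circleMap, Complex.exp_mul_I, Complex.ofReal_one, one_mul, zero_add,
      Complex.sub_re, Complex.sub_im, Complex.add_re, Complex.add_im, Complex.mul_I_re,
      Complex.mul_I_im, Complex.cos_ofReal_re, Complex.cos_ofReal_im, Complex.sin_ofReal_re,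
      Complex.sin_ofReal_im, Complex.ofReal_re, Complex.ofReal_im]
    linear_combination sin_sq_add_cos_sq θ
  rw [poissonKernel_def, sub_zero, sub_zero, hnorm]
  simp

lemma one_sub_circleMap_sq_re (θ : ℝ) : (1 - circleMap 0 1 θ ^ 2).re = 2 * sin θ ^ 2 := by
  simp only [circleMap, Complex.exp_mul_I, Complex.ofReal_one, one_mul, zero_add, sq,
    Complex.sub_re, Complex.one_re, Complex.mul_re, Complex.add_re, Complex.add_im,
    Complex.mul_im, Complex.I_re, Complex.I_im, Complex.cos_ofReal_re, Complex.cos_ofReal_im,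
    Complex.sin_ofReal_re, Complex.sin_ofReal_im]
  linear_combination -sin_sq_add_cos_sq θ

-- Poisson's formula at the point `r` for the harmonic function `Re (1 - ζ²)`.
lemma integral_sin_sq_div_of_abs_lt_one {r : ℝ} (hr : |r| < 1) :
    ∫ θ in (0 : ℝ)..π, sin θ ^ 2 / (1 - 2 * r * cos θ + r ^ 2) = π / 2 := by
  have hr2 : 0 < 1 - r ^ 2 := sub_pos.2 ((sq_lt_one_iff_abs_lt_one r).2 hr)
  have hD (θ : ℝ) : 1 - 2 * r * cos θ + r ^ 2 ≠ 0 := by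
    nlinarith [abs_lt.1 hr, sq_nonneg (r - cos θ), sq_nonneg (1 - r * cos θ), cos_sq_le_one θ,
      sin_sq_add_cos_sq θ]
  have hcont : Continuous fun θ ↦ sin θ ^ 2 / (1 - 2 * r * cos θ + r ^ 2) := by
    fun_prop (disch := exact hD _)
  have hf : InnerProductSpace.HarmonicOnNhd (fun ζ : ℂ ↦ (1 - ζ ^ 2).re)
      (Metric.closedBall 0 1) := fun _ _ ↦ AnalyticAt.harmonicAt_re (by fun_prop)
  have hpoisson := hf.circleAverage_poissonKernel_smul (w := r) (by simpa using hr)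
  have hintegrand (θ : ℝ) : (1 - r ^ 2) / (1 - 2 * r * cos θ + r ^ 2) * (2 * sin θ ^ 2) =
      2 * (1 - r ^ 2) * (sin θ ^ 2 / (1 - 2 * r * cos θ + r ^ 2)) := by ring
  have hvalue : (1 - (r : ℂ) ^ 2).re = 1 - r ^ 2 := by
    rw [← Complex.ofReal_pow, ← Complex.ofReal_one, ← Complex.ofReal_sub, Complex.ofReal_re]
  simp only [circleAverage_def, Pi.mul_apply, smul_eq_mul, poissonKernel_circleMap,
    one_sub_circleMap_sq_re, hintegrand, hvalue, intervalIntegral.integral_const_mul] at hpoisson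
  rw [intervalIntegral_two_pi_of_symm hcont fun θ ↦ by rw [sin_two_pi_sub, cos_two_pi_sub, neg_sq]]
    at hpoisson
  field_simp at hpoisson ⊢
  linarith

lemma integral_sin_sq_div_of_sq_eq_one {r : ℝ} (hr : r ^ 2 = 1) :
    ∫ θ in (0 : ℝ)..π, sin θ ^ 2 / (1 - 2 * r * cos θ + r ^ 2) = π / 2 := by
  calc ∫ θ in (0 : ℝ)..π, sin θ ^ 2 / (1 - 2 * r * cos θ + r ^ 2)
      = ∫ θ in (0 : ℝ)..π, (1 / 2 + r / 2 * cos θ) := by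
        refine intervalIntegral.integral_congr_Ioo_of_le pi_pos.le fun θ hθ ↦ ?_
        have hD : 1 - 2 * r * cos θ + r ^ 2 ≠ 0 := ((pow_pos (sin_pos_of_mem_Ioo hθ) 2).trans_le
          (sin_sq_le_one_sub_two_mul_cos_add_sq r θ)).ne'
        rw [div_eq_iff hD]
        linear_combination sin_sq_add_cos_sq θ + (cos θ ^ 2 - 1 / 2 - r / 2 * cos θ) * hr
    _ = π / 2 := by
        rw [intervalIntegral.integral_add (by simp)
          (Continuous.intervalIntegrable (by fun_prop) _ _), intervalIntegral.integral_const,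
          intervalIntegral.integral_const_mul, integral_cos, sin_pi, sin_zero, smul_eq_mul]
        ring

lemma integral_sin_sq_div_of_one_lt_abs {r : ℝ} (hr : 1 < |r|) :
    ∫ θ in (0 : ℝ)..π, sin θ ^ 2 / (1 - 2 * r * cos θ + r ^ 2) = π / (2 * r ^ 2) := by
  have hr0 : r ≠ 0 := abs_pos.1 (one_pos.trans hr)
  have hinv (θ : ℝ) : sin θ ^ 2 / (1 - 2 * r * cos θ + r ^ 2) =
      (r ^ 2)⁻¹ * (sin θ ^ 2 / (1 - 2 * r⁻¹ * cos θ + r⁻¹ ^ 2)) := by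
    have : 1 - 2 * r * cos θ + r ^ 2 = r ^ 2 * (1 - 2 * r⁻¹ * cos θ + r⁻¹ ^ 2) := by
      field_simp
      ring
    rw [this, div_mul_eq_div_div_swap, div_eq_inv_mul]
  simp_rw [hinv]
  rw [intervalIntegral.integral_const_mul, integral_sin_sq_div_of_abs_lt_one
    (by rw [abs_inv]; exact inv_lt_one_of_one_lt₀ hr)]
  field_simp

lemma integral_sin_sq_div (r : ℝ) :
    ∫ θ in (0 : ℝ)..π, sin θ ^ 2 / (1 - 2 * r * cos θ + r ^ 2) = π / (2 * max 1 (r ^ 2)) := by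
  rcases lt_trichotomy |r| 1 with h | h | h
  · rw [integral_sin_sq_div_of_abs_lt_one h,
      max_eq_left ((sq_lt_one_iff_abs_lt_one r).2 h).le, mul_one]
  · have hr : r ^ 2 = 1 := by rw [← sq_abs, h, one_pow]
    rw [integral_sin_sq_div_of_sq_eq_one hr, hr, max_self, mul_one]
  · rw [integral_sin_sq_div_of_one_lt_abs h, max_eq_right ((one_lt_sq_iff_one_lt_abs r).2 h).le]

end PoissonIntegral

section MarcenkoPastur

open Real

/-- The parametrization `θ ↦ |1 + s e^{iθ}|²` of the support `[(1 - s)², (1 + s)²]` of the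
Marčenko–Pastur law of parameter `s²` by a half circle. -/
def mpParam (s θ : ℝ) : ℝ := 1 + 2 * s * cos θ + s ^ 2

/-- The density of the absolutely continuous part of the Marčenko–Pastur law of parameter `s²`. -/
def mpDensity (s : ℝ) : ℝ → ℝ :=
  (Set.Ioo ((1 - s) ^ 2) ((1 + s) ^ 2)).indicator
    fun x ↦ √(((1 + s) ^ 2 - x) * (x - (1 - s) ^ 2)) / (2 * π * x)

lemma MP_eq (c : ℝ) : MP c = ENNReal.ofReal (max (1 - c) 0) • Measure.dirac 0 +
    volume.withDensity fun x ↦ ENNReal.ofReal (mpDensity (√c) x) := rfl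

variable {s c : ℝ} {f : ℝ → ℝ}

lemma sin_sq_le_mpParam (s θ : ℝ) : sin θ ^ 2 ≤ mpParam s θ := by
  simpa [mpParam] using sin_sq_le_one_sub_two_mul_cos_add_sq (-s) θ

lemma mpParam_pos (s : ℝ) {θ : ℝ} (hθ : θ ∈ Set.Ioo 0 π) : 0 < mpParam s θ :=
  (pow_pos (sin_pos_of_mem_Ioo hθ) 2).trans_le (sin_sq_le_mpParam s θ)

lemma continuous_mpParam (s : ℝ) : Continuous (mpParam s) := by
  unfold mpParam
  fun_prop

lemma mpParam_mem_Icc (hs : 0 ≤ s) (θ : ℝ) : mpParam s θ ∈ Set.Icc 0 ((1 + s) ^ 2) := by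
  refine ⟨(sq_nonneg _).trans (sin_sq_le_mpParam s θ), ?_⟩
  have := mul_le_mul_of_nonneg_left (cos_le_one θ) hs
  unfold mpParam
  linarith

lemma hasDerivAt_mpParam (s θ : ℝ) : HasDerivAt (mpParam s) (2 * s * -sin θ) θ :=
  (((hasDerivAt_cos θ).const_mul (2 * s)).const_add 1).add_const (s ^ 2)

lemma injOn_mpParam (hs : 0 < s) : Set.InjOn (mpParam s) (Set.Ioo 0 π) := by
  intro θ hθ φ hφ h
  refine injOn_cos (Set.Ioo_subset_Icc_self hθ) (Set.Ioo_subset_Icc_self hφ) ?_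
  simpa [mpParam, hs.ne'] using h

lemma cos_mem_Ioo {θ : ℝ} (hθ : θ ∈ Set.Ioo 0 π) : cos θ ∈ Set.Ioo (-1) 1 := by
  rw [← cos_pi, ← cos_zero]
  exact ⟨cos_lt_cos_of_nonneg_of_le_pi hθ.1.le le_rfl hθ.2,
    cos_lt_cos_of_nonneg_of_le_pi le_rfl hθ.2.le hθ.1⟩

lemma image_mpParam (hs : 0 < s) :
    mpParam s '' Set.Ioo 0 π = Set.Ioo ((1 - s) ^ 2) ((1 + s) ^ 2) := by
  ext x
  constructor
  · rintro ⟨θ, hθ, rfl⟩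
    obtain ⟨h₁, h₂⟩ := cos_mem_Ioo hθ
    unfold mpParam
    constructor <;> nlinarith
  · rintro ⟨h₁, h₂⟩
    have h₁' : -1 < (x - 1 - s ^ 2) / (2 * s) := by
      rw [lt_div_iff₀ (by positivity)]
      linarith
    have h₂' : (x - 1 - s ^ 2) / (2 * s) < 1 := by
      rw [div_lt_one (by positivity)]
      linarith
    refine ⟨arccos ((x - 1 - s ^ 2) / (2 * s)), ⟨arccos_pos.2 h₂', arccos_lt_pi.2 h₁'⟩, ?_⟩
    rw [mpParam, cos_arccos h₁'.le h₂'.le]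
    field_simp
    ring

lemma mpDensity_nonneg (s x : ℝ) : 0 ≤ mpDensity s x :=
  Set.indicator_nonneg (fun _ hy ↦ div_nonneg (sqrt_nonneg _)
    (mul_nonneg two_pi_pos.le ((sq_nonneg _).trans hy.1.le))) x

lemma measurable_mpDensity (s : ℝ) : Measurable (mpDensity s) :=
  Measurable.indicator (by fun_prop) measurableSet_Ioo

lemma support_mpDensity_mul_subset (s : ℝ) (f : ℝ → ℝ) :
    (Function.support fun x ↦ mpDensity s x * f x) ⊆ Set.Ioo ((1 - s) ^ 2) ((1 + s) ^ 2) :=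
  (Function.support_mul_subset_left _ _).trans Set.support_indicator_subset

lemma abs_deriv_smul_mpDensity_mul (hs : 0 < s) (f : ℝ → ℝ) {θ : ℝ} (hθ : θ ∈ Set.Ioo 0 π) :
    |2 * s * -sin θ| • (mpDensity s (mpParam s θ) * f (mpParam s θ)) =
      2 * s ^ 2 / π * (f (mpParam s θ) * (sin θ ^ 2 / mpParam s θ)) := by
  have hsin := sin_pos_of_mem_Ioo hθ
  have hx := (mpParam_pos s hθ).ne'
  have hmem : mpParam s θ ∈ Set.Ioo ((1 - s) ^ 2) ((1 + s) ^ 2) :=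
    image_mpParam hs ▸ Set.mem_image_of_mem _ hθ
  have hsq : ((1 + s) ^ 2 - mpParam s θ) * (mpParam s θ - (1 - s) ^ 2) = (2 * s * sin θ) ^ 2 := by
    unfold mpParam
    linear_combination (-4 * s ^ 2) * sin_sq_add_cos_sq θ
  rw [mpDensity, Set.indicator_of_mem hmem, hsq, sqrt_sq (by positivity), mul_neg, abs_neg,
    abs_of_pos (by positivity), smul_eq_mul]
  field_simp

lemma integrableOn_mpParam (hs : 0 ≤ s) (hf : ContinuousOn f (Set.Icc 0 ((1 + s) ^ 2))) :
    IntegrableOn (fun θ ↦ f (mpParam s θ) * (sin θ ^ 2 / mpParam s θ)) (Set.Ioo 0 π) := by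
  have hfc : Continuous fun θ ↦ f (mpParam s θ) :=
    hf.comp_continuous (continuous_mpParam s) (mpParam_mem_Icc hs)
  refine Integrable.mono' ((hfc.abs.integrableOn_Icc (a := 0) (b := π)).mono_set
    Set.Ioo_subset_Icc_self) ?_ (ae_of_all _ fun θ ↦ ?_)
  · exact (hfc.measurable.mul (((measurable_sin.pow_const 2)).div
      (continuous_mpParam s).measurable)).aestronglyMeasurable
  · rw [norm_mul, Real.norm_eq_abs, Real.norm_eq_abs,
      abs_of_nonneg (div_nonneg (sq_nonneg _) (mpParam_mem_Icc hs θ).1)]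
    exact mul_le_of_le_one_right (abs_nonneg _)
      (div_le_one_of_le₀ (sin_sq_le_mpParam s θ) (mpParam_mem_Icc hs θ).1)

lemma integrable_mpDensity_mul (hs : 0 < s) (hf : ContinuousOn f (Set.Icc 0 ((1 + s) ^ 2))) :
    Integrable fun x ↦ mpDensity s x * f x := by
  rw [← integrableOn_iff_integrable_of_support_subset (support_mpDensity_mul_subset s f),
    ← image_mpParam hs, integrableOn_image_iff_integrableOn_abs_deriv_smul measurableSet_Ioo
      (fun θ _ ↦ (hasDerivAt_mpParam s θ).hasDerivWithinAt) (injOn_mpParam hs),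
    integrableOn_congr_fun (fun θ hθ ↦ abs_deriv_smul_mpDensity_mul hs f hθ) measurableSet_Ioo]
  exact (integrableOn_mpParam hs.le hf).const_mul _

lemma integral_mpDensity_mul (hs : 0 < s) (f : ℝ → ℝ) :
    ∫ x, mpDensity s x * f x =
      2 * s ^ 2 / π * ∫ θ in (0 : ℝ)..π, f (mpParam s θ) * (sin θ ^ 2 / mpParam s θ) := by
  rw [← setIntegral_eq_integral_of_forall_compl_eq_zero fun x hx ↦
      Function.notMem_support.1 fun h ↦ hx (support_mpDensity_mul_subset s f h),
    ← image_mpParam hs, integral_image_eq_integral_abs_deriv_smul measurableSet_Ioo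
      (fun θ _ ↦ (hasDerivAt_mpParam s θ).hasDerivWithinAt) (injOn_mpParam hs),
    setIntegral_congr_fun measurableSet_Ioo fun θ hθ ↦ abs_deriv_smul_mpDensity_mul hs f hθ,
    integral_const_mul, intervalIntegral.integral_of_le pi_pos.le, integral_Ioc_eq_integral_Ioo]

lemma integral_MP (hc : 0 < c) (hf : ContinuousOn f (Set.Icc 0 ((1 + √c) ^ 2))) :
    ∫ x, f x ∂MP c = max (1 - c) 0 * f 0 +
      2 * c / π * ∫ θ in (0 : ℝ)..π, f (mpParam (√c) θ) * (sin θ ^ 2 / mpParam (√c) θ) := by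
  have hs : 0 < √c := sqrt_pos.2 hc
  have hmeas : Measurable fun x ↦ ENNReal.ofReal (mpDensity (√c) x) :=
    (measurable_mpDensity _).ennreal_ofReal
  have hfin : ∀ᵐ x, ENNReal.ofReal (mpDensity (√c) x) < ⊤ :=
    ae_of_all _ fun _ ↦ ENNReal.ofReal_lt_top
  have hac : Integrable f (volume.withDensity fun x ↦ ENNReal.ofReal (mpDensity (√c) x)) := by
    rw [integrable_withDensity_iff_integrable_smul' hmeas hfin]
    simpa only [ENNReal.toReal_ofReal (mpDensity_nonneg _ _), smul_eq_mul]
      using integrable_mpDensity_mul hs hf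
  rw [MP_eq, integral_add_measure ((integrable_dirac (by simp)).smul_measure
      ENNReal.ofReal_ne_top) hac, integral_smul_measure, integral_dirac,
    integral_withDensity_eq_integral_toReal_smul hmeas hfin,
    ENNReal.toReal_ofReal (le_max_right _ _), smul_eq_mul]
  simp only [ENNReal.toReal_ofReal (mpDensity_nonneg _ _), smul_eq_mul,
    integral_mpDensity_mul hs, sq_sqrt hc.le]

lemma ae_mem_Icc_MP (c : ℝ) : ∀ᵐ x ∂MP c, x ∈ Set.Icc 0 ((1 + √c) ^ 2) := by
  rw [MP_eq, ae_add_measure_iff]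
  refine ⟨Measure.ae_smul_measure ?_ _, ?_⟩
  · exact (ae_dirac_iff measurableSet_Icc).2 ⟨le_rfl, sq_nonneg _⟩
  · rw [ae_withDensity_iff (measurable_mpDensity _).ennreal_ofReal]
    refine ae_of_all _ fun x hx ↦ ?_
    have hx' : x ∈ Set.Ioo ((1 - √c) ^ 2) ((1 + √c) ^ 2) :=
      Set.mem_of_indicator_ne_zero fun h : mpDensity (√c) x = 0 ↦ hx (by rw [h]; simp)
    exact ⟨(sq_nonneg _).trans hx'.1.le, hx'.2.le⟩

lemma integral_sin_sq_div_mpParam (s : ℝ) :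
    ∫ θ in (0 : ℝ)..π, sin θ ^ 2 / mpParam s θ = π / (2 * max 1 (s ^ 2)) := by
  simpa [mpParam] using integral_sin_sq_div (-s)

lemma max_one_sub_add_div_max : max (1 - c) 0 + c / max 1 c = 1 := by
  rcases le_total c 1 with h | h
  · rw [max_eq_left (by linarith), max_eq_left h]
    ring
  · rw [max_eq_right (by linarith), max_eq_right h, div_self (by linarith), zero_add]

lemma isProbabilityMeasure_MP (hc : 0 < c) : IsProbabilityMeasure (MP c) := by
  have hone : ∫ _, (1 : ℝ) ∂MP c = 1 := by
    rw [integral_MP hc continuousOn_const]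
    simp only [one_mul, integral_sin_sq_div_mpParam, sq_sqrt hc.le, mul_one]
    rw [show 2 * c / π * (π / (2 * max 1 c)) = c / max 1 c by field_simp, max_one_sub_add_div_max]
  constructor
  simpa [measureReal_def, ENNReal.toReal_eq_one_iff] using hone

lemma integral_id_MP (hc : 0 < c) : ∫ x, x ∂MP c = c := by
  have h : ∫ θ in (0 : ℝ)..π, mpParam (√c) θ * (sin θ ^ 2 / mpParam (√c) θ) = π / 2 := by
    rw [intervalIntegral.integral_congr_Ioo_of_le (g := fun θ ↦ sin θ ^ 2) pi_pos.le
      fun θ hθ ↦ mul_div_cancel₀ _ (mpParam_pos _ hθ).ne']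
    simp [integral_sin_sq]
  rw [integral_MP hc (continuousOn_id' _), h, mul_zero, zero_add]
  field_simp

lemma integral_sq_MP (hc : 0 < c) : ∫ x, x ^ 2 ∂MP c = c + c ^ 2 := by
  have h : ∫ θ in (0 : ℝ)..π, mpParam (√c) θ ^ 2 * (sin θ ^ 2 / mpParam (√c) θ) =
      (1 + c) * (π / 2) := by
    rw [intervalIntegral.integral_congr_Ioo_of_le pi_pos.le
        (g := fun θ ↦ (1 + c) * sin θ ^ 2 + 2 * √c * (sin θ ^ 2 * cos θ)),
      intervalIntegral.integral_add (Continuous.intervalIntegrable (by fun_prop) _ _)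
        (Continuous.intervalIntegrable (by fun_prop) _ _), intervalIntegral.integral_const_mul,
      intervalIntegral.integral_const_mul]
    · simp [integral_sin_sq]
    · intro θ hθ
      have hx := (mpParam_pos (√c) hθ).ne'
      calc mpParam (√c) θ ^ 2 * (sin θ ^ 2 / mpParam (√c) θ)
          = mpParam (√c) θ * sin θ ^ 2 := by field_simp
        _ = (1 + c) * sin θ ^ 2 + 2 * √c * (sin θ ^ 2 * cos θ) := by
          rw [mpParam, sq_sqrt hc.le]
          ring
  rw [integral_MP hc (by fun_prop), h]
  field_simp
  ring

lemma mpPoint_sub_mpParam {t : ℝ} (ht : t ≠ 0) (θ : ℝ) :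
    (1 + s * t) * (1 + s / t) - mpParam s θ = s / t * (1 - 2 * t * cos θ + t ^ 2) := by
  unfold mpParam
  field_simp
  ring

lemma sq_one_add_lt_mpPoint {t : ℝ} (hs : 0 < s) (ht : 1 < t) :
    (1 + s) ^ 2 < (1 + s * t) * (1 + s / t) := by
  have h : (1 + s * t) * (1 + s / t) - (1 + s) ^ 2 = s * (t - 1) ^ 2 / t := by
    field_simp
    ring
  have : 0 < s * (t - 1) ^ 2 / t := by
    have := sub_pos.2 ht
    positivity
  linarith

-- The resolvent becomes, up to a factor, the reciprocal of the same quadratic in `cos θ` at `t`, so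
-- partial fractions reduce to `integral_sin_sq_div` at `s` and at `t`.
lemma integral_inv_sub_mpParam {t : ℝ} (hs : 0 < s) (ht : 1 < t) :
    ∫ θ in (0 : ℝ)..π,
        ((1 + s * t) * (1 + s / t) - mpParam s θ)⁻¹ * (sin θ ^ 2 / mpParam s θ) =
      ((1 + s * t) * (1 + s / t))⁻¹ * (π / (2 * max 1 (s ^ 2)) + π / (2 * s * t)) := by
  have ht0 : 0 < t := one_pos.trans ht
  have hD (θ : ℝ) : 0 < 1 - 2 * t * cos θ + t ^ 2 := by
    nlinarith [cos_le_one θ, pow_pos (sub_pos.2 ht) 2]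
  have hpartial : Set.EqOn
      (fun θ ↦ ((1 + s * t) * (1 + s / t) - mpParam s θ)⁻¹ * (sin θ ^ 2 / mpParam s θ))
      (fun θ ↦ ((1 + s * t) * (1 + s / t))⁻¹ * (sin θ ^ 2 / mpParam s θ +
        t / s * (sin θ ^ 2 / (1 - 2 * t * cos θ + t ^ 2)))) (Set.Ioo 0 π) := by
    intro θ hθ
    have hx := (mpParam_pos s hθ).ne'
    have hDθ := (hD θ).ne'
    have hz : (1 + s * t) * (1 + s / t) =
        s / t * (1 - 2 * t * cos θ + t ^ 2) + mpParam s θ := by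
      linarith [mpPoint_sub_mpParam (s := s) ht0.ne' θ]
    have hz0 : (1 + s * t) * (1 + s / t) ≠ 0 := by positivity
    simp only [mpPoint_sub_mpParam ht0.ne']
    rw [hz] at hz0 ⊢
    generalize 1 - 2 * t * cos θ + t ^ 2 = y at *
    generalize mpParam s θ = x at *
    have hyx : s * y + t * x ≠ 0 := by
      field_simp at hz0
      exact (div_ne_zero_iff.1 hz0).1
    field_simp
  have hint₁ : IntervalIntegrable (fun θ ↦ sin θ ^ 2 / mpParam s θ) volume 0 π := by
    rw [intervalIntegrable_iff_integrableOn_Ioo_of_le pi_pos.le]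
    simpa using integrableOn_mpParam (f := fun _ ↦ 1) hs.le continuousOn_const
  have hint₂ : IntervalIntegrable
      (fun θ ↦ sin θ ^ 2 / (1 - 2 * t * cos θ + t ^ 2)) volume 0 π :=
    Continuous.intervalIntegrable (.div (by fun_prop) (by fun_prop) fun θ ↦ (hD θ).ne') _ _
  rw [intervalIntegral.integral_congr_Ioo_of_le pi_pos.le hpartial,
    intervalIntegral.integral_const_mul,
    intervalIntegral.integral_add hint₁ (hint₂.const_mul _), intervalIntegral.integral_const_mul,
    integral_sin_sq_div_mpParam, integral_sin_sq_div, max_eq_right (one_le_pow₀ ht.le)]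
  field_simp

lemma integral_inv_sub_MP {t : ℝ} (hc : 0 < c) (ht : 1 < t) :
    ∫ x, ((1 + √c * t) * (1 + √c / t) - x)⁻¹ ∂MP c = (1 + √c * t)⁻¹ := by
  have hs : 0 < √c := sqrt_pos.2 hc
  have : 0 < t := one_pos.trans ht
  have hcst : 2 * c / π * (π / (2 * √c * t)) = √c / t := by
    field_simp
    exact (sq_sqrt hc.le).symm
  have hz : 0 < 1 + √c / t := by positivity
  rw [integral_MP hc (continuousOn_inv_sub (sq_one_add_lt_mpPoint hs ht)),
    integral_inv_sub_mpParam hs ht, sub_zero, sq_sqrt hc.le]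
  calc max (1 - c) 0 * ((1 + √c * t) * (1 + √c / t))⁻¹ + 2 * c / π *
        (((1 + √c * t) * (1 + √c / t))⁻¹ * (π / (2 * max 1 c) + π / (2 * √c * t)))
      = ((1 + √c * t) * (1 + √c / t))⁻¹ * (max (1 - c) 0 + 2 * c / π * (π / (2 * max 1 c)) +
          2 * c / π * (π / (2 * √c * t))) := by ring
    _ = ((1 + √c * t) * (1 + √c / t))⁻¹ * (1 + √c / t) := by
      rw [hcst, show 2 * c / π * (π / (2 * max 1 c)) = c / max 1 c by field_simp,
        max_one_sub_add_div_max]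
    _ = (1 + √c * t)⁻¹ := by rw [mul_inv, inv_mul_cancel_right₀ hz.ne']

end MarcenkoPastur

section Threshold

lemma two_mul_sqrt_mul_sqrt_lt {n c : ℝ} (hn : 1 < n) (hc : 0 ≤ c)
    (hcond : c < (n - 1) ^ 2 / (4 * n)) : 2 * √c * √n < n - 1 := by
  rw [lt_div_iff₀ (by positivity)] at hcond
  refine lt_of_pow_lt_pow_left₀ 2 (by linarith) ?_
  rw [mul_pow, mul_pow, Real.sq_sqrt hc, Real.sq_sqrt (by linarith)]
  linarith

lemma exists_threshold_MP {n c : ℝ} (hn : 1 < n) (hc : 0 < c)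
    (hcond : c < (n - 1) ^ 2 / (4 * n)) :
    ∃ z, (1 + √c) ^ 2 < z ∧
      (∫ x, x ∂MP c) * (z - (1 - n⁻¹) / ∫ x, (z - x)⁻¹ ∂MP c) < ∫ x, x ^ 2 ∂MP c := by
  have ht : 1 < √n := Real.lt_sqrt_of_sq_lt (by simpa using hn)
  have : 0 < √n := one_pos.trans ht
  have hn0 : √n ^ 2 = n := Real.sq_sqrt (by linarith)
  have hlt := two_mul_sqrt_mul_sqrt_lt hn hc.le hcond
  refine ⟨(1 + √c * √n) * (1 + √c / √n), sq_one_add_lt_mpPoint (Real.sqrt_pos.2 hc) ht, ?_⟩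
  rw [integral_inv_sub_MP hc ht, integral_id_MP hc, integral_sq_MP hc, sq, ← mul_one_add]
  refine mul_lt_mul_of_pos_left ?_ hc
  calc (1 + √c * √n) * (1 + √c / √n) - (1 - n⁻¹) / (1 + √c * √n)⁻¹
      = (1 + √c * √n) ^ 2 / √n ^ 2 := by
        rw [show n⁻¹ = (√n ^ 2)⁻¹ by rw [hn0]]
        field_simp
        ring
    _ < 1 + c := by
        rw [div_lt_iff₀ (by positivity), add_sq, mul_pow, Real.sq_sqrt hc.le, hn0]
        linarith

end Threshold

theorem stmt7_general {Ω : Type*} [MeasurableSpace Ω] (ℙ : Measure Ω) [IsProbabilityMeasure ℙ]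
    (n : ℕ) (hn : 2 ≤ n) (X : (d : ℕ) → Ω → Matrix (Fin n × Fin d) (Fin n × Fin d) ℂ)
    (hmeas : ∀ d, Measurable (X d)) (hUI : UnitInv ℙ n X)
    (μ : Measure ℝ) [IsProbabilityMeasure μ] (hconv : StrongConv ℙ n X μ)
    {b z : ℝ} (hμ : ∀ᵐ x ∂μ, x ∈ Set.Icc 0 b) (hbz : b < z)
    (hcrit : (∫ x, x ∂μ) * (z - (1 - (n : ℝ)⁻¹) / ∫ x, (z - x)⁻¹ ∂μ) < ∫ x, x ^ 2 ∂μ) :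
    (∀ᵐ ω ∂ℙ, ∀ᶠ d : ℕ in atTop, X d ω ∉ SEP n d) ∧
      Tendsto (fun d : ℕ => ℙ {ω | X d ω ∈ SEP n d}) atTop (𝓝 0) :=
  have h := hUI.ae_eventually_notMem_SEP hmeas hconv hn hμ hbz hcrit
  ⟨h, tendsto_measure_mem_SEP_of_ae_eventually_notMem hmeas h⟩

/-- if `c < (n−1)²/(4n)`, a unitarily invariant sequence of random PSD
matrices converging strongly to `MP_c` is asymptotically entangled. -/
theorem stmt7
    {Ω : Type*} [MeasurableSpace Ω] (ℙ : Measure Ω) [IsProbabilityMeasure ℙ]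
    (n : ℕ) (hn : 2 ≤ n) (c : ℝ) (hc : 0 < c)
    (X : (d : ℕ) → Ω → Matrix (Fin n × Fin d) (Fin n × Fin d) ℂ)
    (hmeas : ∀ d, Measurable (X d))
    (hpsd : ∀ d ω, (X d ω).PosSemidef)
    (hUI : UnitInv ℙ n X)
    (hconv : StrongConv ℙ n X (MP c))
    (hcond : c < ((n : ℝ) - 1) ^ 2 / (4 * n)) :
    (∀ᵐ ω ∂ℙ, ∀ᶠ d : ℕ in atTop, X d ω ∉ SEP n d) ∧
      Tendsto (fun d : ℕ => ℙ {ω | X d ω ∈ SEP n d}) atTop (𝓝 0) := by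
  have := isProbabilityMeasure_MP hc
  obtain ⟨z, hz, hcrit⟩ := exists_threshold_MP (Nat.one_lt_cast.2 hn) hc hcond
  exact stmt7_general ℙ n hn X hmeas hUI (MP c) hconv (ae_mem_Icc_MP c) hz hcrit
end
end

section
/- Let n ≥ 2 be fixed, c ≥ 1, and let (X_d)_{d≥1} be a unitarily invariant sequence of random positive semidefinite matrices X_d ∈ M_n(ℂ) ⊗ M_d(ℂ) converging strongly to the Marčenko–Pastur distribution MP_c. If √c > (1 + √(n²+n−1)) / (√(n²+n−1) − √(n²−1)), then almost surely, for all sufficiently large d, X_d ∈ SEP_{n,d}; in particular lim_{d→∞} P(X_d ∈ SEP_{n,d}) = 1. -/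
open MeasureTheory Filter Topology Polynomial Matrix Kronecker
open scoped ComplexOrder

noncomputable section

/-!
If `U = ∑ z P_z` is the spectral decomposition of a unitary matrix, then `[1, U; U*, 1]` is
`∑ [1, z; z*, 1] ⊗ P_z`, which is separable because `|z| = 1` on the spectrum; compressing to a
corner of `U` keeps this form. A Hermitian contraction is the average of a unitary and its adjoint,
and a permutation of the columns moves any of its blocks into the corner, so `[1, B; B*, 1]` is
separable for each block `B` of a Hermitian contraction `A`. Half the sum over all `n²` blocks is
`n + A`, and by scaling `X` is separable as soon as `n ‖X - α‖ ≤ α`. For the Marčenko–Pastur law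
take `α = c + 1`: the support is at distance at most `2√c` from `α`, and the condition on `c` forces
`2n < √c`.
-/

/-- The separable cone `SEP n d`, bundled as a convex cone so that sums and nonnegative multiples
of separable matrices are handled by the cone API. -/
def sepCone (n d : ℕ) : PointedCone ℝ (Matrix (Fin n × Fin d) (Fin n × Fin d) ℂ) where
  carrier := SEP n d
  zero_mem' := ⟨0, Fin.elim0, Fin.elim0, fun i => i.elim0, fun i => i.elim0, by simp⟩
  add_mem' := by
    rintro _ _ ⟨k, A, B, hA, hB, rfl⟩ ⟨l, A', B', hA', hB', rfl⟩
    refine ⟨k + l, Fin.append A A', Fin.append B B', fun i => ?_, fun i => ?_, ?_⟩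
    · induction i using Fin.addCases <;> simp [hA, hA']
    · induction i using Fin.addCases <;> simp [hB, hB']
    · simp [Fin.sum_univ_add]
  smul_mem' := by
    rintro r _ ⟨k, A, B, hA, hB, rfl⟩
    exact ⟨k, fun i => (r : ℝ) • A i, B, fun i => (hA i).smul r.2, hB,
      by simp only [smul_kronecker, ← Finset.smul_sum]; rfl⟩

theorem kronecker_mem_sepCone {n d : ℕ} {A : Matrix (Fin n) (Fin n) ℂ}
    {B : Matrix (Fin d) (Fin d) ℂ} (hA : A.PosSemidef) (hB : B.PosSemidef) :
    A ⊗ₖ B ∈ sepCone n d :=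
  ⟨1, fun _ => A, fun _ => B, fun _ => hA, fun _ => hB, by simp⟩

section BlockDecomposition

variable {m l : Type*} [DecidableEq m]

theorem sum_single_kronecker_submatrix {R : Type*} [NonAssocSemiring R] [Fintype m]
    (X : Matrix (m × l) (m × l) R) :
    ∑ i, ∑ j, single i j (1 : R) ⊗ₖ X.submatrix (Prod.mk i) (Prod.mk j) = X := by
  ext ⟨a, b⟩ ⟨a', b'⟩
  simp [Matrix.sum_apply, single_apply, ite_and]

theorem posSemidef_single_add_smul_single {R : Type*} [CommRing R] [PartialOrder R]
    [StarRing R] [StarOrderedRing R] [Finite m] (i j : m) {z : R} (hz : z * star z = 1) :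
    (single i i 1 + single j j 1 + z • single i j 1 + star z • single j i 1 :
      Matrix m m R).PosSemidef := by
  have := Fintype.ofFinite m
  have star_single (k : m) : star (Pi.single k 1 : m → R) = Pi.single k 1 := by
    rw [← Pi.single_star, star_one]
  convert posSemidef_vecMulVec_self_star (z • Pi.single i 1 + Pi.single j 1 : m → R) using 1
  simp only [star_add, star_smul, star_single, add_vecMulVec, vecMulVec_add, smul_vecMulVec,
    vecMulVec_smul, ← single_eq_single_vecMulVec_single, smul_smul, mul_comm (star z) z, hz,
    one_smul, smul_add]
  abel

variable [DecidableEq l]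

/-- The matrix with blocks `[1, B; Bᴴ, 1]` in rows and columns `i`, `j`, and zero elsewhere; for
`i = j` it is `2 + B + Bᴴ` in position `(i, i)`. A Hermitian block matrix is decomposed into these
pieces, whose separability is decided one block at a time. -/
def pairBlock (i j : m) (B : Matrix l l ℂ) : Matrix (m × l) (m × l) ℂ :=
  (single i i 1 + single j j 1) ⊗ₖ 1 + single i j 1 ⊗ₖ B + single j i 1 ⊗ₖ Bᴴ

theorem pairBlock_smul_add_smul (i j : m) (B C : Matrix l l ℂ) {a b : ℝ} (hab : a + b = 1) :
    pairBlock i j (a • B + b • C) = a • pairBlock i j B + b • pairBlock i j C := by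
  obtain rfl : b = 1 - a := eq_sub_of_add_eq' hab
  ext p q
  simp only [pairBlock, conjTranspose_add, conjTranspose_smul, star_trivial, Matrix.add_apply,
    kroneckerMap_apply, Matrix.smul_apply, Complex.real_smul, Complex.ofReal_sub,
    Complex.ofReal_one]
  ring

theorem pairBlock_sum_smul (i j : m) {ι : Type*} {s : Finset ι} (z : ι → ℂ) {Q : ι → Matrix l l ℂ}
    (hQ : ∀ k, (Q k).IsHermitian) (hone : ∑ k ∈ s, Q k = 1) :
    pairBlock i j (∑ k ∈ s, z k • Q k) = ∑ k ∈ s,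
      (single i i 1 + single j j 1 + z k • single i j 1 + star (z k) • single j i 1) ⊗ₖ Q k := by
  have hstar : (∑ k ∈ s, z k • Q k)ᴴ = ∑ k ∈ s, star (z k) • Q k := by
    simp only [conjTranspose_sum, conjTranspose_smul, (hQ _).eq]
  ext p q
  rw [pairBlock, hstar, ← hone]
  simp only [Matrix.add_apply, kroneckerMap_apply, Matrix.sum_apply, Matrix.smul_apply,
    smul_eq_mul, Finset.mul_sum, ← Finset.sum_add_distrib]
  exact Finset.sum_congr rfl fun k _ => by ring

theorem sum_pairBlock_submatrix [Fintype m] (X : Matrix (m × l) (m × l) ℂ) :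
    ∑ i, ∑ j, pairBlock i j (X.submatrix (Prod.mk i) (Prod.mk j)) =
      (2 * Fintype.card m : ℝ) • 1 + X + Xᴴ := by
  have hone : ∑ i : m, single i i (1 : ℂ) ⊗ₖ (1 : Matrix l l ℂ) = 1 := by
    ext ⟨a, b⟩ ⟨a', b'⟩
    by_cases hb : b = b' <;> simp [Matrix.sum_apply, single_apply, one_apply, ite_and, hb]
  have hdiag : ∑ i : m, ∑ j : m, (single i i (1 : ℂ) + single j j 1) ⊗ₖ (1 : Matrix l l ℂ) =
      (2 * Fintype.card m : ℝ) • 1 := by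
    simp only [add_kronecker, Finset.sum_add_distrib, Finset.sum_const, Finset.card_univ,
      ← Finset.smul_sum, hone]
    module
  have hadj : ∑ i, ∑ j, single j i (1 : ℂ) ⊗ₖ (X.submatrix (Prod.mk i) (Prod.mk j))ᴴ = Xᴴ := by
    rw [Finset.sum_comm]
    exact sum_single_kronecker_submatrix Xᴴ
  simp only [pairBlock, Finset.sum_add_distrib, hdiag, hadj, sum_single_kronecker_submatrix]

end BlockDecomposition

theorem submatrix_perm_mem_unitaryGroup {N R : Type*} [Fintype N] [DecidableEq N] [CommRing R]
    [StarRing R] {U : Matrix N N R} (hU : U ∈ unitaryGroup N R) (σ : Equiv.Perm N) :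
    U.submatrix id σ ∈ unitaryGroup N R := by
  rw [mem_unitaryGroup_iff, star_eq_conjTranspose, conjTranspose_submatrix, submatrix_mul_equiv,
    ← star_eq_conjTranspose, hU.2, submatrix_id_id]

theorem cfc_eq_sum_of_finite_spectrum {R A : Type*} {p : A → Prop} [DecidableEq R] [CommSemiring R]
    [StarRing R] [MetricSpace R] [IsTopologicalSemiring R] [ContinuousStar R] [TopologicalSpace A]
    [Ring A] [StarRing A] [Algebra R A] [ContinuousFunctionalCalculus R A p] [ContinuousAdd A]
    {a : A} (ha : (spectrum R a).Finite) (f : R → R) :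
    cfc f a = ∑ z ∈ ha.toFinset, f z • cfc (Pi.single z 1 : R → R) a := by
  rw [Finset.sum_congr rfl fun z _ => (cfc_smul (f z) _ a (ha.continuousOn _)).symm,
    ← cfc_sum _ a _ fun z _ => ha.continuousOn _]
  refine cfc_congr fun w hw => ?_
  simp [Finset.sum_apply, Pi.single_apply, hw]

theorem exists_mem_unitary_eq_smul_add_smul_star {A : Type*} [CStarAlgebra A] {a : A}
    (ha : IsSelfAdjoint a) (hnorm : ‖a‖ ≤ 1) :
    ∃ u ∈ unitary A, a = (2⁻¹ : ℝ) • u + (2⁻¹ : ℝ) • star u := by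
  let := CStarAlgebra.spectralOrder A
  let := CStarAlgebra.spectralOrderedRing A
  let u := selfAdjoint.unitarySelfAddISMul ⟨a, ha⟩ hnorm
  refine ⟨u, u.2, ?_⟩
  rw [← smul_add, ← realPart_apply_coe]
  exact (congrArg Subtype.val (selfAdjoint.realPart_unitarySelfAddISMul ⟨a, ha⟩ hnorm)).symm

section ContractionBlocks

open scoped Matrix.Norms.L2Operator MatrixOrder

variable {N : Type*} [Fintype N] [DecidableEq N] {n d : ℕ}

theorem pairBlock_mem_sepCone_of_unitary (i j : Fin n) (e : Fin d ↪ N) {U : Matrix N N ℂ}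
    (hU : U ∈ unitary (Matrix N N ℂ)) : pairBlock i j (U.submatrix e e) ∈ sepCone n d := by
  have : IsStarNormal U := ⟨hU.1.trans hU.2.symm⟩
  let s := U.finite_spectrum.toFinset
  let Q : ℂ → Matrix (Fin d) (Fin d) ℂ := fun z =>
    (cfc (Pi.single z 1 : ℂ → ℂ) U).submatrix e e
  have hQ (z : ℂ) : (Q z).PosSemidef := by
    refine (nonneg_iff_posSemidef.1 (cfc_nonneg fun w _ => ?_)).submatrix e
    exact (Pi.single_nonneg.2 zero_le_one : 0 ≤ (Pi.single z 1 : ℂ → ℂ)) w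
  have hz {z : ℂ} (h : z ∈ s) : z * star z = 1 :=
    (spectrum_subset_unitary_of_mem_unitary hU (U.finite_spectrum.mem_toFinset.1 h)).2
  have hcfc (f : ℂ → ℂ) : (cfc f U).submatrix e e = ∑ z ∈ s, f z • Q z := by
    ext p q
    simp [cfc_eq_sum_of_finite_spectrum U.finite_spectrum f, Matrix.sum_apply, s, Q]
  have hone : ∑ z ∈ s, Q z = 1 := by
    simpa [cfc_const_one ℂ U, submatrix_one_embedding] using (hcfc fun _ => 1).symm
  have hsum : U.submatrix e e = ∑ z ∈ s, z • Q z := by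
    simpa [cfc_id' ℂ U] using hcfc fun z => z
  rw [hsum, pairBlock_sum_smul i j _ (fun z => (hQ z).isHermitian) hone]
  exact sum_mem fun z h =>
    kronecker_mem_sepCone (posSemidef_single_add_smul_single i j (hz h)) (hQ z)

theorem pairBlock_submatrix_mem_sepCone (i j : Fin n) (e f : Fin d ↪ N) {A : Matrix N N ℂ}
    (hA : A.IsHermitian) (hnorm : ‖A‖ ≤ 1) : pairBlock i j (A.submatrix e f) ∈ sepCone n d := by
  obtain ⟨σ, hσ⟩ := Equiv.Perm.exists_extending_pair e f e.injective f.injective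
  obtain ⟨U, hU, hAU⟩ := exists_mem_unitary_eq_smul_add_smul_star hA.isSelfAdjoint hnorm
  have hmem {W : Matrix N N ℂ} (hW : W ∈ unitary (Matrix N N ℂ)) :
      pairBlock i j (W.submatrix e f) ∈ sepCone n d := by
    -- permuting columns keeps `W` unitary and turns its `(e, f)` corner into a principal one
    have hcorner : W.submatrix e f = (W.submatrix id σ).submatrix e e := by
      ext p q
      simp [hσ]
    rw [hcorner]
    exact pairBlock_mem_sepCone_of_unitary i j e (submatrix_perm_mem_unitaryGroup hW σ)
  have hblock : A.submatrix e f =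
      (2⁻¹ : ℝ) • U.submatrix e f + (2⁻¹ : ℝ) • (star U).submatrix e f := by
    rw [hAU]
    rfl
  rw [hblock, pairBlock_smul_add_smul i j _ _ (by norm_num)]
  exact add_mem ((sepCone n d).smul_mem (by positivity) (hmem hU))
    ((sepCone n d).smul_mem (by positivity) (hmem (Unitary.star_mem hU)))

theorem natCast_smul_one_add_mem_sepCone {A : Matrix (Fin n × Fin d) (Fin n × Fin d) ℂ}
    (hA : A.IsHermitian) (hnorm : ‖A‖ ≤ 1) : (n : ℝ) • 1 + A ∈ sepCone n d := by
  have hsum : ∑ i, ∑ j, pairBlock i j (A.submatrix (Prod.mk i) (Prod.mk j)) =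
      (2 : ℝ) • ((n : ℝ) • 1 + A) := by
    simp only [sum_pairBlock_submatrix, hA.eq, Fintype.card_fin, smul_add, two_smul]
    module
  rw [← inv_smul_smul₀ (two_ne_zero (α := ℝ)) ((n : ℝ) • 1 + A), ← hsum]
  refine (sepCone n d).smul_mem (by positivity) (sum_mem fun i _ => sum_mem fun j _ => ?_)
  exact pairBlock_submatrix_mem_sepCone i j ⟨_, Prod.mk_right_injective i⟩
    ⟨_, Prod.mk_right_injective j⟩ hA hnorm

theorem mem_SEP_of_mul_opNorm_sub_le {X : Matrix (Fin n × Fin d) (Fin n × Fin d) ℂ}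
    (hX : X.IsHermitian) {α : ℝ} (hα : n * opNorm (X - (α : ℂ) • 1) ≤ α) : X ∈ SEP n d := by
  set Δ := X - (α : ℂ) • 1
  change n * ‖Δ‖ ≤ α at hα
  have hΔ : Δ.IsHermitian := hX.sub (isHermitian_one.smul (by simp [IsSelfAdjoint]))
  have hone : (1 : Matrix (Fin n × Fin d) (Fin n × Fin d) ℂ) ∈ sepCone n d := by
    simpa using kronecker_mem_sepCone (PosSemidef.one (n := Fin n)) (PosSemidef.one (n := Fin d))
  have hnorm : ‖‖Δ‖⁻¹ • Δ‖ ≤ 1 := by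
    rw [norm_smul, norm_inv, norm_norm]
    exact inv_mul_le_one
  have hdecomp : X = (α - n * ‖Δ‖) • 1 + ‖Δ‖ • ((n : ℝ) • 1 + ‖Δ‖⁻¹ • Δ) := by
    have hscale : ‖Δ‖ • ‖Δ‖⁻¹ • Δ = Δ := NormedSpace.norm_smul_normalize Δ
    calc X = α • 1 + Δ := by simp [Δ]
      _ = _ := by rw [smul_add, hscale]; module
  rw [hdecomp]
  exact add_mem ((sepCone n d).smul_mem (sub_nonneg.2 hα) hone)
    ((sepCone n d).smul_mem (norm_nonneg Δ)
      (natCast_smul_one_add_mem_sepCone (hΔ.smul (.all _)) hnorm))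

end ContractionBlocks

theorem msupport_eq_support (μ : Measure ℝ) : msupport μ = μ.support := by
  simp [msupport, Measure.support_eq_forall_isOpen, imp.swap]

theorem msupport_MP_subset_closedBall {c : ℝ} (hc : 1 ≤ c) :
    msupport (MP c) ⊆ Metric.closedBall (c + 1) (2 * √c) := by
  have hsq : √c ^ 2 = c := Real.sq_sqrt (zero_le_one.trans hc)
  have hIoo : Set.Ioo ((1 - √c) ^ 2) ((1 + √c) ^ 2) ⊆ Metric.closedBall (c + 1) (2 * √c) := by
    rw [Real.closedBall_eq_Icc]
    exact Set.Ioo_subset_Icc_self.trans (Set.Icc_subset_Icc (by linarith) (by linarith))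
  rw [msupport_eq_support]
  refine Measure.support_subset_of_isClosed Metric.isClosed_closedBall ?_
  rw [mem_ae_iff, MP, max_eq_right (sub_nonpos.2 hc), ENNReal.ofReal_zero, zero_smul, zero_add,
    withDensity_apply _ Metric.isClosed_closedBall.measurableSet.compl]
  refine setLIntegral_eq_zero Metric.isClosed_closedBall.measurableSet.compl fun x hx => ?_
  simp [Set.indicator_of_notMem fun h => hx (hIoo h)]

theorem two_mul_le_one_add_sqrt_div {x : ℝ} (hx : 1 ≤ x) :
    2 * x ≤ (1 + √(x ^ 2 + x - 1)) / (√(x ^ 2 + x - 1) - √(x ^ 2 - 1)) := by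
  set s := √(x ^ 2 + x - 1)
  set t := √(x ^ 2 - 1)
  have hs : x ≤ s := Real.le_sqrt_of_sq_le (by linarith)
  have ht : x - 1 ≤ t := Real.le_sqrt_of_sq_le (by nlinarith)
  have hts : t < s := Real.sqrt_lt_sqrt (by nlinarith) (by linarith)
  have hdiff : (s - t) * (s + t) = x := by
    linear_combination Real.sq_sqrt (show 0 ≤ x ^ 2 + x - 1 by nlinarith) -
      Real.sq_sqrt (show 0 ≤ x ^ 2 - 1 by nlinarith)
  rw [le_div_iff₀ (sub_pos.2 hts)]
  refine le_of_mul_le_mul_right ?_ (show 0 < s + t by linarith)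
  calc 2 * x * (s - t) * (s + t) = 2 * x ^ 2 := by linear_combination 2 * x * hdiff
    _ ≤ (1 + x) * (x + (x - 1)) := by linarith
    _ ≤ (1 + s) * (s + t) := by gcongr

theorem mul_two_mul_sqrt_lt_add_one {x c : ℝ} (hx : 1 ≤ x) (hc : 0 ≤ c)
    (h : (1 + √(x ^ 2 + x - 1)) / (√(x ^ 2 + x - 1) - √(x ^ 2 - 1)) < √c) :
    x * (2 * √c) < c + 1 := by
  have hlt : 2 * x < √c := (two_mul_le_one_add_sqrt_div hx).trans_lt h
  calc x * (2 * √c) = 2 * x * √c := by ring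
    _ ≤ √c * √c := by gcongr
    _ = c := Real.mul_self_sqrt hc
    _ < c + 1 := lt_add_one c

theorem tendsto_measure_setOf_of_ae_eventually {Ω ι : Type*} [MeasurableSpace Ω] {μ : Measure Ω}
    [Preorder ι] [IsDirectedOrder ι] [Nonempty ι] [(atTop : Filter ι).IsCountablyGenerated]
    {p : ι → Ω → Prop} (h : ∀ᵐ ω ∂μ, ∀ᶠ i in atTop, p i ω) :
    Tendsto (fun i => μ {ω | p i ω}) atTop (𝓝 (μ Set.univ)) := by
  have hmono : Monotone fun i => {ω | ∀ j ≥ i, p j ω} :=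
    fun i i' hi ω hω j hj => hω j (hi.trans hj)
  have hunion : μ (⋃ i, {ω | ∀ j ≥ i, p j ω}) = μ Set.univ := by
    refine measure_congr (eventuallyEq_univ.2 ?_)
    filter_upwards [h] with ω hω
    simpa [eventually_atTop] using hω
  refine tendsto_of_tendsto_of_tendsto_of_le_of_le
    (hunion ▸ tendsto_measure_iUnion_atTop hmono) tendsto_const_nhds
    (fun i => measure_mono fun ω (hω : ∀ j ≥ i, p j ω) => hω i le_rfl)
    fun i => measure_mono (Set.subset_univ _)

theorem stmt8_general {Ω : Type*} [MeasurableSpace Ω] (ℙ : Measure Ω) [IsProbabilityMeasure ℙ]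
    {n : ℕ} {X : (d : ℕ) → Ω → Matrix (Fin n × Fin d) (Fin n × Fin d) ℂ} {μ : Measure ℝ}
    {α r : ℝ} (hX : ∀ d ω, (X d ω).IsHermitian) (hconv : StrongConv ℙ n X μ) (hr : 0 ≤ r)
    (hμ : msupport μ ⊆ Metric.closedBall α r) (hα : n * r < α) :
    (∀ᵐ ω ∂ℙ, ∀ᶠ d : ℕ in atTop, X d ω ∈ SEP n d) ∧
      Tendsto (fun d : ℕ => ℙ {ω | X d ω ∈ SEP n d}) atTop (𝓝 1) := by
  have hae : ∀ᵐ ω ∂ℙ, ∀ᶠ d : ℕ in atTop, X d ω ∈ SEP n d := by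
    let P : ℝ[X] := Polynomial.X - Polynomial.C α
    have hsup : sSup ((fun x => |P.eval x|) '' msupport μ) ≤ r := by
      refine Real.sSup_le (Set.forall_mem_image.2 fun x hx => ?_) hr
      simpa [P, Real.dist_eq] using hμ hx
    have hlim : n * sSup ((fun x => |P.eval x|) '' msupport μ) < α := by
      refine lt_of_le_of_lt ?_ hα
      gcongr
    filter_upwards [hconv] with ω hω
    filter_upwards [((hω P).2.const_mul (n : ℝ)).eventually_lt_const hlim] with d hd
    refine mem_SEP_of_mul_opNorm_sub_le (hX d ω) (α := α) (le_of_lt ?_)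
    simpa [P, polyApply, Algebra.algebraMap_eq_smul_one] using hd
  exact ⟨hae, by simpa using tendsto_measure_setOf_of_ae_eventually hae⟩

/-- if `√c > (1+√(n²+n−1))/(√(n²+n−1)−√(n²−1))`, a unitarily invariant
sequence of random PSD matrices converging strongly to `MP_c` (`c ≥ 1`) is
asymptotically separable. -/
theorem stmt8
    {Ω : Type*} [MeasurableSpace Ω] (ℙ : Measure Ω) [IsProbabilityMeasure ℙ]
    (n : ℕ) (hn : 2 ≤ n) (c : ℝ) (hc : 1 ≤ c)
    (X : (d : ℕ) → Ω → Matrix (Fin n × Fin d) (Fin n × Fin d) ℂ)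
    (hmeas : ∀ d, Measurable (X d))
    (hpsd : ∀ d ω, (X d ω).PosSemidef)
    (hUI : UnitInv ℙ n X)
    (hconv : StrongConv ℙ n X (MP c))
    (hcond : Real.sqrt c > (1 + Real.sqrt ((n : ℝ) ^ 2 + n - 1))
        / (Real.sqrt ((n : ℝ) ^ 2 + n - 1) - Real.sqrt ((n : ℝ) ^ 2 - 1))) :
    (∀ᵐ ω ∂ℙ, ∀ᶠ d : ℕ in atTop, X d ω ∈ SEP n d) ∧
      Tendsto (fun d : ℕ => ℙ {ω | X d ω ∈ SEP n d}) atTop (𝓝 1) := by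
  exact stmt8_general ℙ (fun d ω => (hpsd d ω).isHermitian) hconv (by positivity)
    (msupport_MP_subset_closedBall hc)
    (mul_two_mul_sqrt_lt_add_one (by exact_mod_cast one_le_two.trans hn) (by positivity) hcond)
end
end
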